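/- arXiv:math/0102066 — 4 statements merged into one kernel-verified Lean document; each statement's English description precedes it below -/
import Mathlib

section
/- If σ ≤ σ′ in S_p and τ ≤ τ′ in S_q for the weak Bruhat orders, then σ∨τ ≤ σ′∨τ′ in S_{p+q+1} for the weak Bruhat order, where ∨ denotes grafting of permutations. -/
/-! Symmetric groups `Sₙ` are modelled as `Equiv.Perm (Fin n)` (with `0`-indexed letters, so
the letter `i ∈ {1, …, n}` of the paper corresponds to `i - 1 : Fin n`), with the group law
`σ · τ = σ * τ` given by composition: `(σ * τ) x = σ (τ x)`. -/

/-- `s` is a Coxeter generator `sᵢ`, i.e. the transposition of two consecutive letters. -/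
def IsAdjacentTransposition {n : ℕ} (s : Equiv.Perm (Fin n)) : Prop :=
  ∃ (i : ℕ) (h : i + 1 < n), s = Equiv.swap ⟨i, by omega⟩ ⟨i + 1, h⟩

/-- The length `l(σ)`: the least `k` such that `σ` is a product of `k` Coxeter
generators `sᵢ`. -/
noncomputable def permLength {n : ℕ} (σ : Equiv.Perm (Fin n)) : ℕ :=
  sInf {k | ∃ L : List (Equiv.Perm (Fin n)),
    L.length = k ∧ (∀ s ∈ L, IsAdjacentTransposition s) ∧ L.prod = σ}

/-- The weak Bruhat order on `Sₙ`: `ω ≤ σ` iff there is `τ` with `σ = τ · ω` and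
`l(σ) = l(τ) + l(ω)`. -/
def weakLe {n : ℕ} (ω σ : Equiv.Perm (Fin n)) : Prop :=
  ∃ τ : Equiv.Perm (Fin n), σ = τ * ω ∧ permLength σ = permLength τ + permLength ω

/-- The strict weak Bruhat order. -/
def weakLt {n : ℕ} (ω σ : Equiv.Perm (Fin n)) : Prop :=
  weakLe ω σ ∧ ω ≠ σ

/-- `σ × τ`: the image of `(σ, τ)` under the canonical embedding
`S_p × S_q ↪ S_{p+q}`, where `σ` permutes the first `p` letters and `τ` the last `q`. -/
def blockSum {p q : ℕ} (σ : Equiv.Perm (Fin p)) (τ : Equiv.Perm (Fin q)) :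
    Equiv.Perm (Fin (p + q)) :=
  finSumFinEquiv.symm.trans ((Equiv.sumCongr σ τ).trans finSumFinEquiv)

/-- `ξ` is a `(p,q)`-shuffle: `ξ(1) < … < ξ(p)` and `ξ(p+1) < … < ξ(p+q)`. -/
def IsShuffle (p q : ℕ) (ξ : Equiv.Perm (Fin (p + q))) : Prop :=
  (∀ i j : Fin (p + q), (i : ℕ) < (j : ℕ) → (j : ℕ) < p → ξ i < ξ j) ∧
  (∀ i j : Fin (p + q), p ≤ (i : ℕ) → (i : ℕ) < (j : ℕ) → ξ i < ξ j)

/-- `ξ_{p,q} ∈ S_{p+q}`: the permutation with one-line notation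
`(q+1, q+2, …, q+p, 1, 2, …, q)`. -/
def xi (p q : ℕ) : Equiv.Perm (Fin (p + q)) :=
  finSumFinEquiv.symm.trans ((Equiv.sumComm (Fin p) (Fin q)).trans
    (finSumFinEquiv.trans (finCongr (Nat.add_comm q p))))

/-- Transport of a permutation along an equality of the number of letters. -/
def permCast {m n : ℕ} (h : m = n) (π : Equiv.Perm (Fin m)) : Equiv.Perm (Fin n) :=
  (finCongr h).permCongr π

/-- The grafting `σ ∨ τ ∈ S_{p+q+1}` of `σ ∈ S_p` and `τ ∈ S_q`: in 1-indexed one-line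
notation, `(σ∨τ)(i) = σ(i)` for `1 ≤ i ≤ p`, `(σ∨τ)(p+1) = p+q+1`, and
`(σ∨τ)(i) = τ(i-p-1) + p` for `p+2 ≤ i ≤ p+q+1`.  (Equivalently,
`σ ∨ τ = (σ × τ × 1₁) · s_{p+q} · s_{p+q-1} · ⋯ · s_{p+1}`.) -/
def graft {p q : ℕ} (σ : Equiv.Perm (Fin p)) (τ : Equiv.Perm (Fin q)) :
    Equiv.Perm (Fin (p + q + 1)) :=
  blockSum (blockSum σ τ) (1 : Equiv.Perm (Fin 1)) *
    permCast (by omega) (blockSum (1 : Equiv.Perm (Fin p)) (finRotate (q + 1))⁻¹)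

/-- The `over` operation on permutations: `σ / τ := σ × τ`. -/
def overP {p q : ℕ} (σ : Equiv.Perm (Fin p)) (τ : Equiv.Perm (Fin q)) :
    Equiv.Perm (Fin (p + q)) :=
  blockSum σ τ

/-- The `under` operation on permutations: `σ \ τ := ξ_{p,q} · (σ × τ)`. -/
def underP {p q : ℕ} (σ : Equiv.Perm (Fin p)) (τ : Equiv.Perm (Fin q)) :
    Equiv.Perm (Fin (p + q)) :=
  xi p q * blockSum σ τ

/-!
The length of a permutation is its number of inversions. The inversion set of `τ * ω` is the
symmetric difference of the inversion set of `ω` and the preimage under `ω` of that of `τ`, so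
lengths add exactly when these two sets are disjoint, that is, when the inversions of `ω` are also
inversions of `τ * ω`: the weak Bruhat order is inclusion of inversion sets. The inversions of
`σ ∨ τ` are those of `σ`, those of `τ` (shifted), and all pairs formed by the position of the
maximal letter and a later position; hence grafting is monotone.
-/

open Finset symmDiff

theorem card_symmDiff_add_two_mul_card_inter {ι : Type*} [DecidableEq ι] (s t : Finset ι) :
    #(s ∆ t) + 2 * #(s ∩ t) = #s + #t := by
  have hst : #(s ∆ t) = #(s \ t) + #(t \ s) :=
    card_union_of_disjoint disjoint_sdiff_sdiff
  have hs := card_sdiff_add_card_inter s t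
  have ht := card_sdiff_add_card_inter t s
  rw [inter_comm] at ht
  lia

theorem mk_mem_map_sym2Map_symm {α β : Type*} {s : Finset (Sym2 β)} {e : α ≃ β} {x y : α} :
    s(x, y) ∈ s.map e.symm.toEmbedding.sym2Map ↔ s(e x, e y) ∈ s := by
  have hxy : s(x, y) = e.symm.toEmbedding.sym2Map s(e x, e y) := by simp
  rw [hxy, mem_map']

section Inversions

variable {α : Type*} [LinearOrder α]

@[elab_as_elim]
theorem sym2_induction_of_lt {motive : Sym2 α → Prop} (diag : ∀ x, motive s(x, x))
    (mk_of_lt : ∀ x y, x < y → motive s(x, y)) (z : Sym2 α) : motive z := by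
  induction z with
  | _ x y =>
    rcases lt_trichotomy x y with hxy | rfl | hyx
    · exact mk_of_lt x y hxy
    · exact diag x
    · exact Sym2.eq_swap ▸ mk_of_lt y x hyx

theorem exists_covBy_symm_lt_symm_of_ne_one [Finite α] {σ : Equiv.Perm α} (hσ : σ ≠ 1) :
    ∃ a b, a ⋖ b ∧ σ.symm b < σ.symm a := by
  cases nonempty_fintype α
  let _ : LocallyFiniteOrder α := Fintype.toLocallyFiniteOrder
  contrapose! hσ
  have hmono : StrictMono σ.symm := (strictMono_iff_forall_covBy _).mpr fun a b hab ↦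
    (hσ a b hab).lt_of_ne (σ.symm.injective.ne hab.ne)
  have hid : (σ.symm : α → α) = id :=
    (hmono.range_inj strictMono_id).mp (by simp)
  ext x
  simpa using (congrFun hid (σ x)).symm

variable [Fintype α]

/-- The inversion set of a permutation. Inversions are recorded as unordered pairs of positions
so that permutations act on them. -/
def inversions (σ : Equiv.Perm α) : Finset (Sym2 α) :=
  {z | σ z.sup < σ z.inf}

theorem mk_mem_inversions_of_lt {σ : Equiv.Perm α} {x y : α} (hxy : x < y) :
    s(x, y) ∈ inversions σ ↔ σ y < σ x := by
  simp [inversions, hxy.le]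

theorem mk_self_notMem_inversions (σ : Equiv.Perm α) (x : α) : s(x, x) ∉ inversions σ := by
  simp [inversions]

theorem inversions_subset_iff {ω σ : Equiv.Perm α} :
    inversions ω ⊆ inversions σ ↔ ∀ x y, x < y → ω y < ω x → σ y < σ x := by
  refine ⟨fun h x y hxy hω ↦ ?_, fun h z hz ↦ ?_⟩
  · rw [← mk_mem_inversions_of_lt hxy] at hω ⊢
    exact h hω
  · induction z using sym2_induction_of_lt with
    | diag x => exact absurd hz (mk_self_notMem_inversions ω x)
    | mk_of_lt x y hxy =>
      rw [mk_mem_inversions_of_lt hxy] at hz ⊢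
      exact h x y hxy hz

@[simp]
theorem inversions_one : inversions (1 : Equiv.Perm α) = ∅ :=
  filter_eq_empty_iff.mpr fun z _ ↦ z.inf_le_sup.not_gt

theorem inversions_mul (τ ω : Equiv.Perm α) :
    inversions (τ * ω) =
      inversions ω ∆ (inversions τ).map ω.symm.toEmbedding.sym2Map := by
  ext z
  induction z using sym2_induction_of_lt with
  | diag x =>
    simp only [mem_symmDiff, mk_mem_map_sym2Map_symm, mk_self_notMem_inversions, false_and,
      or_false]
  | mk_of_lt x y hxy =>
    rw [mem_symmDiff, mk_mem_map_sym2Map_symm, mk_mem_inversions_of_lt hxy,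
      mk_mem_inversions_of_lt hxy, Equiv.Perm.mul_apply, Equiv.Perm.mul_apply]
    rcases lt_or_gt_of_ne (ω.injective.ne hxy.ne) with hω | hω
    · simp [mk_mem_inversions_of_lt hω, hω.not_gt]
    · have hτ : τ (ω y) ≠ τ (ω x) := τ.injective.ne hω.ne
      simp [Sym2.eq_swap (a := ω x), mk_mem_inversions_of_lt hω, hω, hτ.le_iff_lt]

theorem card_inversions_mul_add_two_mul_card_inter (τ ω : Equiv.Perm α) :
    #(inversions (τ * ω)) +
        2 * #(inversions ω ∩ (inversions τ).map ω.symm.toEmbedding.sym2Map) =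
      #(inversions τ) + #(inversions ω) := by
  rw [inversions_mul, card_symmDiff_add_two_mul_card_inter, card_map, add_comm]

theorem card_inversions_mul_le (τ ω : Equiv.Perm α) :
    #(inversions (τ * ω)) ≤ #(inversions τ) + #(inversions ω) :=
  (Nat.le_add_right _ _).trans_eq (card_inversions_mul_add_two_mul_card_inter τ ω)

theorem card_inversions_mul_eq_add_iff (τ ω : Equiv.Perm α) :
    #(inversions (τ * ω)) = #(inversions τ) + #(inversions ω) ↔
      inversions ω ⊆ inversions (τ * ω) := by
  have hdisjoint : inversions ω ⊆ inversions (τ * ω) ↔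
      Disjoint (inversions ω) ((inversions τ).map ω.symm.toEmbedding.sym2Map) := by
    rw [inversions_mul]
    exact le_symmDiff_iff_left _ _
  rw [hdisjoint, disjoint_iff_inter_eq_empty, ← card_eq_zero]
  have hcard := card_inversions_mul_add_two_mul_card_inter τ ω
  lia

theorem inversions_swap_of_covBy {a b : α} (hab : a ⋖ b) :
    inversions (Equiv.swap a b) = {s(a, b)} := by
  ext z
  induction z using sym2_induction_of_lt with
  | diag x =>
    have hne : s(x, x) ≠ s(a, b) := by grind [hab.ne]
    simp [mk_self_notMem_inversions, hne]
  | mk_of_lt x y hxy =>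
    have hx : x < b → x ≤ a := hab.le_of_lt
    have hy : a < y → b ≤ y := hab.ge_of_gt
    rw [mk_mem_inversions_of_lt hxy, mem_singleton]
    grind [hab.lt]

theorem card_inversions_swap_mul_add_one {σ : Equiv.Perm α} {a b : α} (hab : a ⋖ b)
    (hσ : σ.symm b < σ.symm a) :
    #(inversions (Equiv.swap a b * σ)) + 1 = #(inversions σ) := by
  have hmem : s(σ.symm a, σ.symm b) ∈ inversions σ := by
    rw [Sym2.eq_swap, mk_mem_inversions_of_lt hσ]
    simpa using hab.lt
  have herase : inversions (Equiv.swap a b * σ) =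
      (inversions σ).erase s(σ.symm a, σ.symm b) := by
    rw [inversions_mul, inversions_swap_of_covBy hab, map_singleton, erase_eq]
    exact symmDiff_of_ge (singleton_subset_iff.mpr hmem)
  rw [herase, card_erase_add_one hmem]

end Inversions

section Length

variable {n : ℕ}

theorem isAdjacentTransposition_iff_exists_covBy {s : Equiv.Perm (Fin n)} :
    IsAdjacentTransposition s ↔ ∃ a b, a ⋖ b ∧ s = Equiv.swap a b := by
  constructor
  · rintro ⟨i, hi, rfl⟩
    exact ⟨_, _, by simp, rfl⟩
  · rintro ⟨⟨i, _⟩, ⟨j, hj⟩, hij, rfl⟩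
    obtain rfl : i + 1 = j := by simpa using hij
    exact ⟨i, hj, rfl⟩

theorem card_inversions_prod_le_length {L : List (Equiv.Perm (Fin n))}
    (hL : ∀ s ∈ L, IsAdjacentTransposition s) : #(inversions L.prod) ≤ L.length := by
  induction L with
  | nil => simp
  | cons s L ih =>
    obtain ⟨hs, hL'⟩ := List.forall_mem_cons.mp hL
    obtain ⟨a, b, hab, rfl⟩ := isAdjacentTransposition_iff_exists_covBy.mp hs
    calc #(inversions (Equiv.swap a b * L.prod))
        ≤ #(inversions (Equiv.swap a b)) + #(inversions L.prod) := card_inversions_mul_le _ _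
      _ ≤ 1 + L.length := by
        gcongr
        · simp [inversions_swap_of_covBy hab]
        · exact ih hL'
      _ = (Equiv.swap a b :: L).length := by rw [List.length_cons, add_comm]

theorem exists_adjacentTransposition_word_length_eq (σ : Equiv.Perm (Fin n)) :
    ∃ L : List (Equiv.Perm (Fin n)), L.length = #(inversions σ) ∧
      (∀ s ∈ L, IsAdjacentTransposition s) ∧ L.prod = σ := by
  induction hk : #(inversions σ) generalizing σ with
  | zero =>
    have hσ : σ = 1 := by
      by_contra hne
      obtain ⟨a, b, hab, hlt⟩ := exists_covBy_symm_lt_symm_of_ne_one hne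
      have hcard := card_inversions_swap_mul_add_one hab hlt
      lia
    exact ⟨[], by simp [hσ]⟩
  | succ k ih =>
    have hσ : σ ≠ 1 := by
      rintro rfl
      simp at hk
    obtain ⟨a, b, hab, hlt⟩ := exists_covBy_symm_lt_symm_of_ne_one hσ
    have hcard := card_inversions_swap_mul_add_one hab hlt
    obtain ⟨L, hlength, hL, hprod⟩ := ih (Equiv.swap a b * σ) (by lia)
    have hs : IsAdjacentTransposition (Equiv.swap a b) :=
      isAdjacentTransposition_iff_exists_covBy.mpr ⟨a, b, hab, rfl⟩
    refine ⟨Equiv.swap a b :: L, by simp [hlength], List.forall_mem_cons.mpr ⟨hs, hL⟩, ?_⟩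
    rw [List.prod_cons, hprod, Equiv.swap_mul_self_mul]

theorem permLength_eq_card_inversions (σ : Equiv.Perm (Fin n)) :
    permLength σ = #(inversions σ) := by
  have hword := exists_adjacentTransposition_word_length_eq σ
  refine le_antisymm (Nat.sInf_le hword) (le_csInf ⟨_, hword⟩ ?_)
  rintro _ ⟨L, rfl, hL, rfl⟩
  exact card_inversions_prod_le_length hL

theorem weakLe_iff_inversions_subset {ω σ : Equiv.Perm (Fin n)} :
    weakLe ω σ ↔ inversions ω ⊆ inversions σ := by
  simp only [weakLe, permLength_eq_card_inversions]
  constructor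
  · rintro ⟨τ, rfl, hlength⟩
    exact (card_inversions_mul_eq_add_iff τ ω).mp hlength
  · intro hsub
    have hσ : σ = σ * ω⁻¹ * ω := by group
    refine ⟨σ * ω⁻¹, hσ, ?_⟩
    conv_lhs => rw [hσ]
    rwa [card_inversions_mul_eq_add_iff, ← hσ]

end Length

section Graft

variable {p q : ℕ} (σ : Equiv.Perm (Fin p)) (τ : Equiv.Perm (Fin q))

theorem blockSum_castAdd (i : Fin p) :
    blockSum σ τ (i.castAdd q) = (σ i).castAdd q := by
  simp [blockSum]

theorem blockSum_natAdd (j : Fin q) :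
    blockSum σ τ (j.natAdd p) = (τ j).natAdd p := by
  simp [blockSum]

theorem permCast_cast {m n : ℕ} (h : m = n) (π : Equiv.Perm (Fin m)) (x : Fin m) :
    permCast h π (x.cast h) = (π x).cast h := by
  subst h
  rfl

theorem finRotate_inv_zero (n : ℕ) : (finRotate (n + 1))⁻¹ 0 = Fin.last n := by
  rw [Equiv.Perm.inv_eq_iff_eq, finRotate_last]

theorem finRotate_inv_succ {n : ℕ} (j : Fin n) : (finRotate (n + 1))⁻¹ j.succ = j.castSucc := by
  rw [Equiv.Perm.inv_eq_iff_eq]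
  simp

theorem graft_castSucc_castAdd (i : Fin p) :
    graft σ τ (i.castAdd q).castSucc = ((σ i).castAdd q).castSucc := by
  have hpos : (i.castAdd q).castSucc = (i.castAdd (q + 1)).cast (by lia) := rfl
  have hval : ((i.castAdd (q + 1)).cast (by lia) : Fin (p + q + 1)) =
      (i.castAdd q).castAdd 1 := rfl
  rw [graft, Equiv.Perm.mul_apply, hpos, permCast_cast, blockSum_castAdd, Equiv.Perm.one_apply,
    hval, blockSum_castAdd, blockSum_castAdd]
  rfl

theorem graft_mk_eq_last : graft σ τ ⟨p, by lia⟩ = Fin.last (p + q) := by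
  have hpos : (⟨p, by lia⟩ : Fin (p + q + 1)) = ((0 : Fin (q + 1)).natAdd p).cast (by lia) := rfl
  have hval : (((Fin.last q).natAdd p).cast (by lia) : Fin (p + q + 1)) =
      (0 : Fin 1).natAdd (p + q) := rfl
  rw [graft, Equiv.Perm.mul_apply, hpos, permCast_cast, blockSum_natAdd, finRotate_inv_zero, hval,
    blockSum_natAdd]
  rfl

theorem graft_succ_natAdd (j : Fin q) :
    graft σ τ (j.natAdd p).succ = ((τ j).natAdd p).castSucc := by
  have hpos : (j.natAdd p).succ = (j.succ.natAdd p).cast (by lia) := rfl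
  have hval : ((j.castSucc.natAdd p).cast (by lia) : Fin (p + q + 1)) =
      (j.natAdd p).castAdd 1 := rfl
  rw [graft, Equiv.Perm.mul_apply, hpos, permCast_cast, blockSum_natAdd, finRotate_inv_succ, hval,
    blockSum_castAdd, blockSum_natAdd]
  rfl

@[elab_as_elim]
theorem graft_position_cases {motive : Fin (p + q + 1) → Prop}
    (left : ∀ i : Fin p, motive (i.castAdd q).castSucc) (peak : motive ⟨p, by lia⟩)
    (right : ∀ j : Fin q, motive (j.natAdd p).succ) (x : Fin (p + q + 1)) : motive x := by
  rcases lt_trichotomy x.val p with hx | hx | hx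
  · exact left ⟨x, hx⟩
  · convert peak
  · convert right ⟨x - (p + 1), by lia⟩
    ext
    simp only [Fin.val_succ, Fin.natAdd_mk]
    lia

theorem graft_lt_graft_iff_of_lt {x y : Fin (p + q + 1)} (hxy : x < y) :
    graft σ τ y < graft σ τ x ↔
      (∃ i j, x = (i.castAdd q).castSucc ∧ y = (j.castAdd q).castSucc ∧ σ j < σ i) ∨
      x = ⟨p, by lia⟩ ∨
      (∃ i j, x = (i.natAdd p).succ ∧ y = (j.natAdd p).succ ∧ τ j < τ i) := by
  cases x using graft_position_cases <;> cases y using graft_position_cases <;>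
    simp only [graft_castSucc_castAdd, graft_mk_eq_last, graft_succ_natAdd, Fin.lt_def,
      Fin.ext_iff, Fin.val_castSucc, Fin.val_castAdd, Fin.val_last, Fin.val_succ,
      Fin.val_natAdd] at hxy ⊢ <;>
    grind

end Graft

/-- Lemma 1.7: if `σ ≤ σ'` in `S_p` and `τ ≤ τ'` in `S_q` for the weak
Bruhat orders, then `σ ∨ τ ≤ σ' ∨ τ'` in `S_{p+q+1}`. -/
theorem stmt4 (p q : ℕ) (σ σ' : Equiv.Perm (Fin p)) (τ τ' : Equiv.Perm (Fin q))
    (hσ : weakLe σ σ') (hτ : weakLe τ τ') :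
    weakLe (graft σ τ) (graft σ' τ') := by
  simp only [weakLe_iff_inversions_subset, inversions_subset_iff] at hσ hτ ⊢
  intro x y hxy hinv
  rw [graft_lt_graft_iff_of_lt _ _ hxy] at hinv ⊢
  rcases hinv with ⟨i, j, rfl, rfl, hij⟩ | hx | ⟨i, j, rfl, rfl, hij⟩
  · exact .inl ⟨i, j, rfl, rfl, hσ i j hxy hij⟩
  · exact .inr (.inl hx)
  · exact .inr (.inr ⟨i, j, rfl, rfl, hτ i j (by simpa using hxy) hij⟩)
end

section
/- For all σ ∈ S_p and τ ∈ S_q: the set {ω·(σ × τ) : ω ∈ Sh²(p,q)} equals the weak Bruhat interval {ω ∈ S_{p+q} : (1_{p−1}∨1_q)·(σ × τ) ≤ ω ≤ σ\τ}, and the set {ω·(σ × τ) : ω ∈ Sh¹(p,q)} equals the weak Bruhat interval {ω ∈ S_{p+q} : σ/τ ≤ ω ≤ (ξ_{p,q−1} × 1_1)·(σ × τ)}. -/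
/-- `Sh¹(p,q)`: the `(p,q)`-shuffles `ω` with `ω(p+q) = p+q`. -/
def Sh1 (p q : ℕ) (ω : Equiv.Perm (Fin (p + q))) : Prop :=
  IsShuffle p q ω ∧ ∀ i : Fin (p + q), (i : ℕ) + 1 = p + q → ω i = i

/-- `Sh²(p,q)`: the `(p,q)`-shuffles `ω` with `ω(p) = p+q`. -/
def Sh2 (p q : ℕ) (ω : Equiv.Perm (Fin (p + q))) : Prop :=
  IsShuffle p q ω ∧ ∀ i : Fin (p + q), (i : ℕ) + 1 = p → ((ω i : ℕ) + 1 = p + q)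

attribute [local instance] Classical.propDecidable

/-!
Record the inversions of a permutation `σ` as a symmetric set `Inv σ` of pairs of positions. A pair
is inverted by `τ * ω` exactly when one, but not both, of the following holds: `ω` inverts it, or
`τ` inverts its image under `ω`. So `Inv (τ * ω) = Inv ω ∆ ω⁻¹(Inv τ)`. Since the length counts
inversions, `ω ≤ τ * ω` means that `Inv ω` and `ω⁻¹(Inv τ)` are disjoint, and the weak order is
inclusion of inversion sets. Consequently, if `π ≤ α * π` and `π ≤ β * π`, then `ω ↦ ω * π` maps the
interval `[α, β]` onto the interval `[α * π, β * π]`.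

For `π = σ × τ` the condition `π ≤ ω * π` holds for every shuffle `ω`, because `π` inverts only
pairs inside one of the two blocks, whereas a shuffle inverts only pairs across them. This reduces
the theorem to `σ = 1`, `τ = 1`, where the inversions of all the bounds are explicit.
-/

theorem image_filter_univ_eq_of_surjective {α β : Type*} [Fintype α] [Fintype β] [DecidableEq β]
    {f : α → β} (hf : Function.Surjective f) {P : α → Prop} {Q : β → Prop} [DecidablePred P]
    [DecidablePred Q] (hPQ : ∀ x, P x ↔ Q (f x)) :
    (Finset.univ.filter P).image f = Finset.univ.filter Q := by
  rw [← Finset.image_univ_of_surjective hf, Finset.filter_image,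
    Finset.filter_congr fun x _ => hPQ x]

theorem exists_covBy_descent_of_ne_one {α : Type*} [LinearOrder α] [Finite α]
    {σ : Equiv.Perm α} (hσ : σ ≠ 1) :
    ∃ a b, a ⋖ b ∧ σ b < σ a := by
  by_contra! hasc
  have := Fintype.ofFinite α
  let := Fintype.toLocallyFiniteOrder (α := α)
  have hmono : StrictMono σ := (strictMono_iff_forall_covBy σ).2 fun a b hab =>
    (hasc a b hab).lt_of_ne (σ.injective.ne hab.lt.ne)
  exact hσ (DFunLike.coe_injective hmono.eq_id)

section ComapPairs

open Equiv

variable {α : Type*}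

/-- The preimage of a set of pairs under the diagonal action of a permutation on pairs. -/
def comapPairs (ω : Perm α) (s : Finset (α × α)) : Finset (α × α) :=
  s.map (prodCongr ω ω).symm.toEmbedding

theorem mem_comapPairs {ω : Perm α} {s : Finset (α × α)} {x : α × α} :
    x ∈ comapPairs ω s ↔ (ω x.1, ω x.2) ∈ s :=
  Finset.mem_map_equiv

theorem card_comapPairs (ω : Perm α) (s : Finset (α × α)) : (comapPairs ω s).card = s.card :=
  Finset.card_map _

theorem comapPairs_subset_comapPairs {ω : Perm α} {s t : Finset (α × α)} :
    comapPairs ω s ⊆ comapPairs ω t ↔ s ⊆ t :=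
  Finset.map_subset_map

end ComapPairs

section InversionSet

open Equiv
open scoped symmDiff

variable {α : Type*} [LinearOrder α] [Fintype α]

/-- The inversion set of a permutation of a finite linear order. Each inverted pair is recorded in
both orders, so the set has twice as many elements as there are inversions, but pairs need not be
reordered when they are moved along another permutation. -/
noncomputable def inversionSet (σ : Perm α) : Finset (α × α) :=
  {x | ¬(x.1 < x.2 ↔ σ x.1 < σ x.2)}

theorem mem_inversionSet {σ : Perm α} {x : α × α} :
    x ∈ inversionSet σ ↔ ¬(x.1 < x.2 ↔ σ x.1 < σ x.2) := by
  simp only [inversionSet, Finset.mem_filter_univ]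

theorem mk_mem_inversionSet_of_lt {σ : Perm α} {i j : α} (hij : i < j) :
    (i, j) ∈ inversionSet σ ↔ σ j < σ i := by
  have hne : σ j ≠ σ i := σ.injective.ne hij.ne'
  simp only [mem_inversionSet, hij, true_iff, not_lt, hne.le_iff_lt]

theorem mk_mem_inversionSet_of_gt {σ : Perm α} {i j : α} (hij : j < i) :
    (i, j) ∈ inversionSet σ ↔ σ i < σ j := by
  simp only [mem_inversionSet, hij.not_gt, false_iff, not_not]

theorem inversionSet_subset_inversionSet_iff {ω σ : Perm α} :
    inversionSet ω ⊆ inversionSet σ ↔ ∀ i j, i < j → ω j < ω i → σ j < σ i := by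
  constructor
  · intro h i j hij
    simpa only [mk_mem_inversionSet_of_lt hij] using @h (i, j)
  · rintro h ⟨i, j⟩ hx
    rcases lt_trichotomy i j with hij | rfl | hji
    · rw [mk_mem_inversionSet_of_lt hij] at hx ⊢
      exact h i j hij hx
    · simp [mem_inversionSet] at hx
    · rw [mk_mem_inversionSet_of_gt hji] at hx ⊢
      exact h j i hji hx

theorem inversionSet_one : inversionSet (1 : Perm α) = ∅ := by
  simp [inversionSet]

variable [DecidableEq α]

theorem inversionSet_mul (τ ω : Perm α) :
    inversionSet (τ * ω) = inversionSet ω ∆ comapPairs ω (inversionSet τ) := by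
  ext x
  simp only [Finset.mem_symmDiff, mem_comapPairs, mem_inversionSet, Perm.mul_apply]
  tauto

theorem card_inversionSet_mul_add (τ ω : Perm α) :
    (inversionSet (τ * ω)).card +
        2 * (inversionSet ω ∩ comapPairs ω (inversionSet τ)).card =
      (inversionSet τ).card + (inversionSet ω).card := by
  set s := inversionSet ω
  set t := comapPairs ω (inversionSet τ) with ht
  have hmul : (inversionSet (τ * ω)).card = (s \ t).card + (t \ s).card := by
    rw [inversionSet_mul, symmDiff_def]
    exact Finset.card_union_of_disjoint disjoint_sdiff_sdiff
  have hs := Finset.card_sdiff_add_card_inter s t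
  have ht' := Finset.card_sdiff_add_card_inter t s
  rw [Finset.inter_comm, ht, card_comapPairs, ← ht] at ht'
  lia

theorem inversionSet_swap_of_covBy {a b : α} (hab : a ⋖ b) :
    inversionSet (swap a b) = {(a, b), (b, a)} := by
  have hlt : a < b := hab.lt
  have hbetween (c : α) : c ≤ a ∨ b ≤ c := (le_or_gt c a).imp_right hab.ge_of_gt
  ext ⟨i, j⟩
  simp only [mem_inversionSet, swap_apply_def, Finset.mem_insert, Finset.mem_singleton,
    Prod.mk.injEq]
  grind [hbetween i, hbetween j]

theorem card_inversionSet_swap_of_covBy {a b : α} (hab : a ⋖ b) :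
    (inversionSet (swap a b)).card = 2 := by
  rw [inversionSet_swap_of_covBy hab, Finset.card_pair (by simp [hab.lt.ne])]

theorem card_inversionSet_mul_swap_add_two {σ : Perm α} {a b : α} (hab : a ⋖ b)
    (hdesc : σ b < σ a) :
    (inversionSet (σ * swap a b)).card + 2 = (inversionSet σ).card := by
  have hsub : inversionSet (swap a b) ⊆ comapPairs (swap a b) (inversionSet σ) := by
    rw [inversionSet_swap_of_covBy hab]
    simp [Finset.insert_subset_iff, mem_comapPairs, mk_mem_inversionSet_of_lt hab.lt,
      mk_mem_inversionSet_of_gt hab.lt, hdesc]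
  have hcard := card_inversionSet_mul_add σ (swap a b)
  rw [Finset.inter_eq_left.2 hsub, card_inversionSet_swap_of_covBy hab] at hcard
  lia

end InversionSet

section WeakOrder

open Equiv
open scoped symmDiff

variable {n : ℕ} {ω σ τ π α β : Perm (Fin n)}

theorem isAdjacentTransposition_iff_exists_covBy_s9 :
    IsAdjacentTransposition σ ↔ ∃ a b, a ⋖ b ∧ σ = swap a b := by
  constructor
  · rintro ⟨i, hi, rfl⟩
    exact ⟨_, _, by simp, rfl⟩
  · rintro ⟨a, ⟨b, hb⟩, hab, rfl⟩
    obtain rfl : (a : ℕ) + 1 = b := by simpa using hab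
    exact ⟨a, hb, rfl⟩

theorem card_inversionSet_prod_le (L : List (Perm (Fin n)))
    (hL : ∀ s ∈ L, IsAdjacentTransposition s) :
    (inversionSet L.prod).card ≤ 2 * L.length := by
  induction L with
  | nil => simp [inversionSet_one]
  | cons s L ih =>
    obtain ⟨hs, htail⟩ := List.forall_mem_cons.1 hL
    obtain ⟨a, b, hab, rfl⟩ := isAdjacentTransposition_iff_exists_covBy_s9.1 hs
    have hmul := card_inversionSet_mul_add (swap a b) L.prod
    rw [card_inversionSet_swap_of_covBy hab] at hmul
    rw [List.prod_cons, List.length_cons]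
    have hlen := ih htail
    lia

theorem exists_word_length_eq_card_inversionSet (σ : Perm (Fin n)) :
    ∃ L : List (Perm (Fin n)), 2 * L.length = (inversionSet σ).card ∧
      (∀ s ∈ L, IsAdjacentTransposition s) ∧ L.prod = σ := by
  induction hk : (inversionSet σ).card using Nat.strong_induction_on generalizing σ with
  | _ k ih =>
    obtain rfl | hσ := eq_or_ne σ 1
    · exact ⟨[], by simp [← hk, inversionSet_one], by simp, rfl⟩
    obtain ⟨a, b, hab, hdesc⟩ := exists_covBy_descent_of_ne_one hσ
    have hcard := card_inversionSet_mul_swap_add_two hab hdesc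
    obtain ⟨L, hlen, hadj, hprod⟩ := ih _ (by lia) (σ * swap a b) rfl
    refine ⟨L ++ [swap a b], ?_, ?_, ?_⟩
    · rw [List.length_append, List.length_singleton]
      lia
    · rw [List.forall_mem_append, List.forall_mem_singleton]
      exact ⟨hadj, isAdjacentTransposition_iff_exists_covBy_s9.2 ⟨a, b, hab, rfl⟩⟩
    · rw [List.prod_append, hprod, List.prod_singleton, mul_assoc, swap_mul_self, mul_one]

theorem two_mul_permLength_eq_card_inversionSet (σ : Perm (Fin n)) :
    2 * permLength σ = (inversionSet σ).card := by
  obtain ⟨L, hlen, hadj, hprod⟩ := exists_word_length_eq_card_inversionSet σ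
  have hmem : L.length ∈ {k | ∃ L : List (Perm (Fin n)),
      L.length = k ∧ (∀ s ∈ L, IsAdjacentTransposition s) ∧ L.prod = σ} := ⟨L, rfl, hadj, hprod⟩
  have hle : permLength σ ≤ L.length := Nat.sInf_le hmem
  obtain ⟨M, hMlen, hMadj, rfl⟩ := Nat.sInf_mem ⟨_, hmem⟩
  have hge : (inversionSet M.prod).card ≤ 2 * permLength M.prod :=
    (card_inversionSet_prod_le M hMadj).trans_eq (congrArg (2 * ·) hMlen)
  lia

theorem weakLe_mul_self_iff_permLength :
    weakLe ω (τ * ω) ↔ permLength (τ * ω) = permLength τ + permLength ω := by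
  constructor
  · rintro ⟨τ', hmul, hlen⟩
    rwa [mul_right_cancel hmul] at hlen ⊢
  · exact fun hlen => ⟨τ, rfl, hlen⟩

theorem weakLe_mul_self_iff_disjoint :
    weakLe ω (τ * ω) ↔ Disjoint (inversionSet ω) (comapPairs ω (inversionSet τ)) := by
  have hcard := card_inversionSet_mul_add τ ω
  simp only [← two_mul_permLength_eq_card_inversionSet] at hcard
  rw [weakLe_mul_self_iff_permLength, Finset.disjoint_iff_inter_eq_empty, ← Finset.card_eq_zero]
  lia

theorem weakLe_iff_inversionSet_subset :
    weakLe ω σ ↔ inversionSet ω ⊆ inversionSet σ := by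
  obtain ⟨τ, rfl⟩ : ∃ τ, σ = τ * ω := ⟨σ * ω⁻¹, by simp⟩
  rw [weakLe_mul_self_iff_disjoint, inversionSet_mul]
  exact (le_symmDiff_iff_left (inversionSet ω) _).symm

theorem weakLe_iff_forall_lt : weakLe ω σ ↔ ∀ i j, i < j → ω j < ω i → σ j < σ i :=
  weakLe_iff_inversionSet_subset.trans inversionSet_subset_inversionSet_iff

theorem weakLe_trans (h₁ : weakLe ω σ) (h₂ : weakLe σ τ) : weakLe ω τ := by
  rw [weakLe_iff_inversionSet_subset] at *
  exact h₁.trans h₂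

theorem weakLe_refl (ω : Perm (Fin n)) : weakLe ω ω := by
  rw [weakLe_iff_inversionSet_subset]

theorem one_weakLe (ω : Perm (Fin n)) : weakLe 1 ω := by
  simp [weakLe_iff_inversionSet_subset, inversionSet_one]

theorem weakLe_mul_self_of_weakLe (hωβ : weakLe ω β) (hβ : weakLe π (β * π)) :
    weakLe π (ω * π) := by
  rw [weakLe_mul_self_iff_disjoint] at hβ ⊢
  exact hβ.mono_right
    (comapPairs_subset_comapPairs.2 (weakLe_iff_inversionSet_subset.1 hωβ))

theorem mul_right_weakLe_mul_right_iff (hα : weakLe π (α * π)) (hβ : weakLe π (β * π)) :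
    weakLe (α * π) (β * π) ↔ weakLe α β := by
  rw [weakLe_mul_self_iff_disjoint] at hα hβ
  rw [weakLe_iff_inversionSet_subset, weakLe_iff_inversionSet_subset, inversionSet_mul,
    inversionSet_mul, hα.symmDiff_eq_sup, hβ.symmDiff_eq_sup,
    ← comapPairs_subset_comapPairs (ω := π) (s := inversionSet α)]
  exact ⟨fun h => hα.symm.left_le_of_le_sup_left (le_sup_right.trans h),
    fun h => sup_le_sup_left h _⟩

theorem mul_right_mem_interval_iff (hα : weakLe π (α * π)) (hβ : weakLe π (β * π)) :
    weakLe (α * π) (ω * π) ∧ weakLe (ω * π) (β * π) ↔ weakLe α ω ∧ weakLe ω β := by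
  constructor
  · rintro ⟨hαω, hωβ⟩
    have hω : weakLe π (ω * π) := weakLe_trans hα hαω
    exact ⟨(mul_right_weakLe_mul_right_iff hα hω).1 hαω,
      (mul_right_weakLe_mul_right_iff hω hβ).1 hωβ⟩
  · rintro ⟨hαω, hωβ⟩
    have hω : weakLe π (ω * π) := weakLe_mul_self_of_weakLe hωβ hβ
    exact ⟨(mul_right_weakLe_mul_right_iff hα hω).2 hαω,
      (mul_right_weakLe_mul_right_iff hω hβ).2 hωβ⟩

end WeakOrder

section Shuffles

open Equiv

variable {p q r : ℕ}

theorem coe_blockSum_apply (σ : Perm (Fin p)) (τ : Perm (Fin q)) (i : Fin (p + q)) :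
    (blockSum σ τ i : ℕ) =
      if h : (i : ℕ) < p then (σ ⟨i, h⟩ : ℕ) else p + (τ ⟨i - p, by lia⟩ : ℕ) := by
  induction i using Fin.addCases <;> simp [blockSum]

theorem blockSum_one_one : blockSum (1 : Perm (Fin p)) (1 : Perm (Fin q)) = 1 := by
  rw [blockSum, Perm.one_def, Perm.one_def, sumCongr_refl]
  simp [Perm.one_def]

theorem blockSum_apply_lt_iff (σ : Perm (Fin p)) (τ : Perm (Fin q)) (i : Fin (p + q)) :
    (blockSum σ τ i : ℕ) < p ↔ (i : ℕ) < p := by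
  rw [coe_blockSum_apply]
  split_ifs with h <;> simp [h]

theorem coe_xi_apply (i : Fin (p + q)) :
    (xi p q i : ℕ) = if (i : ℕ) < p then q + i else i - p := by
  induction i using Fin.addCases <;> simp [xi, add_comm]

theorem coe_permCast_apply {m n : ℕ} (h : m = n) (π : Perm (Fin m)) (i : Fin n) :
    (permCast h π i : ℕ) = π ⟨i, by lia⟩ := by
  subst h
  rfl

theorem coe_finRotate_inv_apply (i : Fin (q + 1)) :
    ((finRotate (q + 1))⁻¹ i : ℕ) = if (i : ℕ) = 0 then q else i - 1 := by
  change ((finRotate (q + 1)).symm i : ℕ) = _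
  rw [finRotate_symm_apply, Fin.coe_sub_one]
  simp only [Fin.ext_iff, Fin.val_zero]

theorem coe_graft_one_one_apply (i : Fin (p + q + 1)) :
    (graft (1 : Perm (Fin p)) (1 : Perm (Fin q)) i : ℕ) =
      if (i : ℕ) < p then (i : ℕ) else if (i : ℕ) = p then p + q else i - 1 := by
  rw [graft, blockSum_one_one, blockSum_one_one, one_mul, coe_permCast_apply, coe_blockSum_apply]
  simp only [coe_finRotate_inv_apply, Perm.one_apply]
  split_ifs <;> lia

theorem xi_apply_lt_iff {i j : Fin (p + q)} (hij : i < j) :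
    xi p q j < xi p q i ↔ (i : ℕ) < p ∧ p ≤ (j : ℕ) := by
  simp only [Fin.lt_def, coe_xi_apply] at hij ⊢
  split_ifs <;> lia

theorem permCast_graft_one_one_apply_lt_iff (h : r + q + 1 = p + q) {i j : Fin (p + q)}
    (hij : i < j) :
    permCast h (graft (1 : Perm (Fin r)) (1 : Perm (Fin q))) j <
        permCast h (graft (1 : Perm (Fin r)) (1 : Perm (Fin q))) i ↔
      (i : ℕ) + 1 = p := by
  simp only [Fin.lt_def, coe_permCast_apply, coe_graft_one_one_apply] at hij ⊢
  split_ifs <;> lia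

theorem permCast_blockSum_xi_one_apply_lt_iff (h : p + r + 1 = p + q) {i j : Fin (p + q)}
    (hij : i < j) :
    permCast h (blockSum (xi p r) (1 : Perm (Fin 1))) j <
        permCast h (blockSum (xi p r) (1 : Perm (Fin 1))) i ↔
      (i : ℕ) < p ∧ p ≤ (j : ℕ) ∧ (j : ℕ) + 1 ≠ p + q := by
  simp only [Fin.lt_def, coe_permCast_apply, coe_blockSum_apply, coe_xi_apply, Perm.one_apply]
    at hij ⊢
  split_ifs <;> lia

theorem isShuffle_iff_weakLe_xi {ω : Perm (Fin (p + q))} :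
    IsShuffle p q ω ↔ weakLe ω (xi p q) := by
  rw [weakLe_iff_forall_lt]
  constructor
  · rintro ⟨hfst, hsnd⟩ i j hij hω
    rw [xi_apply_lt_iff hij]
    by_contra hblock
    by_cases hj : (j : ℕ) < p
    · exact (hfst i j hij hj).not_gt hω
    · exact (hsnd i j (by lia) hij).not_gt hω
  · intro h
    have hlt {i j : Fin (p + q)} (hij : i < j) (hblock : ¬((i : ℕ) < p ∧ p ≤ (j : ℕ))) :
        ω i < ω j := by
      refine (not_lt.1 fun hω => hblock ?_).lt_of_ne (ω.injective.ne hij.ne)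
      exact (xi_apply_lt_iff hij).1 (h i j hij hω)
    exact ⟨fun i j hij hj => hlt hij (by lia), fun i j hi hij => hlt hij (by lia)⟩

theorem isShuffle_xi : IsShuffle p q (xi p q) :=
  isShuffle_iff_weakLe_xi.2 (weakLe_refl _)

theorem isShuffle_one : IsShuffle p q 1 :=
  isShuffle_iff_weakLe_xi.2 (one_weakLe _)

theorem blockSum_weakLe_mul_of_isShuffle {ω : Perm (Fin (p + q))} (hω : IsShuffle p q ω)
    (σ : Perm (Fin p)) (τ : Perm (Fin q)) :
    weakLe (blockSum σ τ) (ω * blockSum σ τ) := by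
  rw [weakLe_iff_forall_lt]
  intro i j hij hinv
  have hi := blockSum_apply_lt_iff σ τ i
  have hj := blockSum_apply_lt_iff σ τ j
  by_cases hblock : (i : ℕ) < p
  · exact hω.1 _ _ hinv (hi.2 hblock)
  · exact hω.2 _ _ (by lia) hinv

theorem coe_apply_add_one_eq_iff_forall_lt {n : ℕ} (ω : Perm (Fin n)) (i : Fin n) :
    (ω i : ℕ) + 1 = n ↔ ∀ j ≠ i, ω j < ω i := by
  constructor
  · intro hmax j hji
    have hne : ω j ≠ ω i := ω.injective.ne hji
    lia
  · intro hmax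
    obtain ⟨j, hj⟩ := ω.surjective ⟨n - 1, Nat.sub_one_lt_of_lt i.isLt⟩
    obtain rfl : j = i := by
      by_contra hji
      have hlt := hmax j hji
      rw [hj, Fin.lt_def] at hlt
      lia
    rw [hj]
    lia

theorem permCast_graft_one_one_weakLe_iff (h : r + q + 1 = p + q) {ω : Perm (Fin (p + q))} :
    weakLe (permCast h (graft (1 : Perm (Fin r)) (1 : Perm (Fin q)))) ω ↔
      ∀ i j : Fin (p + q), i < j → (i : ℕ) + 1 = p → ω j < ω i := by
  rw [weakLe_iff_forall_lt]
  refine forall₃_congr fun i j hij => ?_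
  rw [permCast_graft_one_one_apply_lt_iff h hij]

theorem isShuffle_permCast_graft_one_one (h : r + q + 1 = p + q) :
    IsShuffle p q (permCast h (graft (1 : Perm (Fin r)) (1 : Perm (Fin q)))) := by
  rw [isShuffle_iff_weakLe_xi, permCast_graft_one_one_weakLe_iff]
  intro i j hij hi
  exact (xi_apply_lt_iff hij).2 (by lia)

theorem sh2_iff_mem_interval (h : r + q + 1 = p + q) {ω : Perm (Fin (p + q))} :
    Sh2 p q ω ↔
      weakLe (permCast h (graft (1 : Perm (Fin r)) (1 : Perm (Fin q)))) ω ∧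
        weakLe ω (xi p q) := by
  rw [Sh2, and_comm, ← isShuffle_iff_weakLe_xi, permCast_graft_one_one_weakLe_iff]
  refine and_congr_left fun hω => ?_
  simp only [coe_apply_add_one_eq_iff_forall_lt]
  constructor
  · exact fun hmax i j hij hi => hmax i hi j hij.ne'
  · intro hgt i hi j hji
    rcases lt_or_gt_of_ne hji with hlt | hij
    · exact hω.1 j i hlt (by lia)
    · exact hgt i j hij hi

theorem weakLe_permCast_blockSum_xi_one_iff (h : p + r + 1 = p + q) {ω : Perm (Fin (p + q))} :
    weakLe ω (permCast h (blockSum (xi p r) (1 : Perm (Fin 1)))) ↔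
      IsShuffle p q ω ∧ ∀ i j : Fin (p + q), i < j → (j : ℕ) + 1 = p + q → ω i < ω j := by
  rw [isShuffle_iff_weakLe_xi, weakLe_iff_forall_lt, weakLe_iff_forall_lt]
  simp only [← forall_and]
  refine forall₃_congr fun i j hij => ?_
  rw [permCast_blockSum_xi_one_apply_lt_iff h hij, xi_apply_lt_iff hij]
  have hne : ω i ≠ ω j := ω.injective.ne hij.ne
  grind

theorem isShuffle_permCast_blockSum_xi_one (h : p + r + 1 = p + q) :
    IsShuffle p q (permCast h (blockSum (xi p r) (1 : Perm (Fin 1)))) :=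
  ((weakLe_permCast_blockSum_xi_one_iff h).1 (weakLe_refl _)).1

theorem sh1_iff_mem_interval (h : p + r + 1 = p + q) {ω : Perm (Fin (p + q))} :
    Sh1 p q ω ↔
      weakLe 1 ω ∧ weakLe ω (permCast h (blockSum (xi p r) (1 : Perm (Fin 1)))) := by
  rw [Sh1, weakLe_permCast_blockSum_xi_one_iff, and_iff_right (one_weakLe ω)]
  refine and_congr_right fun _ => ?_
  have hfix (i : Fin (p + q)) (hi : (i : ℕ) + 1 = p + q) : ω i = i ↔ ∀ j ≠ i, ω j < ω i := by
    rw [← coe_apply_add_one_eq_iff_forall_lt, Fin.ext_iff]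
    lia
  constructor
  · exact fun hlast i j hij hj => (hfix j hj).1 (hlast j hj) i hij.ne
  · exact fun hlt i hi => (hfix i hi).2 fun j hji => hlt j i (by lia) hi

theorem mul_blockSum_mem_interval_iff {α β ω : Perm (Fin (p + q))} (hα : IsShuffle p q α)
    (hβ : IsShuffle p q β) (σ : Perm (Fin p)) (τ : Perm (Fin q)) :
    weakLe (α * blockSum σ τ) (ω * blockSum σ τ) ∧ weakLe (ω * blockSum σ τ) (β * blockSum σ τ) ↔
      weakLe α ω ∧ weakLe ω β :=
  mul_right_mem_interval_iff (blockSum_weakLe_mul_of_isShuffle hα σ τ)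
    (blockSum_weakLe_mul_of_isShuffle hβ σ τ)

end Shuffles

/-- Proposition 4.6: for `σ ∈ S_p`, `τ ∈ S_q`,
`{ω · (σ × τ) : ω ∈ Sh²(p,q)}` equals the weak Bruhat interval
`{ω : (1_{p-1} ∨ 1_q) · (σ × τ) ≤ ω ≤ σ\τ}`, and `{ω · (σ × τ) : ω ∈ Sh¹(p,q)}` equals
the weak Bruhat interval `{ω : σ/τ ≤ ω ≤ (ξ_{p,q-1} × 1₁) · (σ × τ)}`. -/
theorem stmt9 (p q : ℕ) (hp : 1 ≤ p) (hq : 1 ≤ q)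
    (σ : Equiv.Perm (Fin p)) (τ : Equiv.Perm (Fin q)) :
    ((Finset.univ.filter (Sh2 p q)).image (fun ω => ω * blockSum σ τ) =
      Finset.univ.filter (fun ω =>
        weakLe (permCast (by omega : p - 1 + q + 1 = p + q)
            (graft (1 : Equiv.Perm (Fin (p - 1))) (1 : Equiv.Perm (Fin q))) *
            blockSum σ τ) ω ∧
        weakLe ω (underP σ τ))) ∧
    ((Finset.univ.filter (Sh1 p q)).image (fun ω => ω * blockSum σ τ) =
      Finset.univ.filter (fun ω =>
        weakLe (overP σ τ) ω ∧
        weakLe ω (permCast (by omega : p + (q - 1) + 1 = p + q)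
            (blockSum (xi p (q - 1)) (1 : Equiv.Perm (Fin 1))) * blockSum σ τ))) := by
  constructor
  · refine image_filter_univ_eq_of_surjective (mul_right_surjective (blockSum σ τ)) fun ω => ?_
    rw [sh2_iff_mem_interval (r := p - 1) (by lia)]
    exact (mul_blockSum_mem_interval_iff (isShuffle_permCast_graft_one_one _) isShuffle_xi
      σ τ).symm
  · refine image_filter_univ_eq_of_surjective (mul_right_surjective (blockSum σ τ)) fun ω => ?_
    rw [sh1_iff_mem_interval (r := q - 1) (by lia), ← one_mul (overP σ τ)]
    exact (mul_blockSum_mem_interval_iff isShuffle_one (isShuffle_permCast_blockSum_xi_one _)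
      σ τ).symm
end

section
/- On the augmentation ideal of the Malvenuto–Reutenauer algebra, the products ≺ and ≻ defined by σ ≺ τ := Σ_{ω ∈ Sh²(p,q)} ω·(σ × τ) and σ ≻ τ := Σ_{ω ∈ Sh¹(p,q)} ω·(σ × τ) (for σ ∈ S_p, τ ∈ S_q, p,q ≥ 1, extended bilinearly) satisfy the dendriform relations: (a ≺ b) ≺ c = a ≺ (b ≺ c) + a ≺ (b ≻ c), a ≻ (b ≺ c) = (a ≻ b) ≺ c, and a ≻ (b ≻ c) = (a ≺ b) ≻ c + (a ≻ b) ≻ c, for all a, b, c in ⊕_{n≥1} ℚ[S_n]; moreover σ * τ = σ ≺ τ + σ ≻ τ where * is the Malvenuto–Reutenauer product. -/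
attribute [local instance] Classical.propDecidable

/-- `σ ≺ τ := Σ_{ω ∈ Sh²(p,q)} ω · (σ × τ)` on basis elements. -/
noncomputable def precB {p q : ℕ} (σ : Equiv.Perm (Fin p)) (τ : Equiv.Perm (Fin q)) :
    Equiv.Perm (Fin (p + q)) →₀ ℚ :=
  ∑ ω ∈ Finset.univ.filter (Sh2 p q), Finsupp.single (ω * blockSum σ τ) 1

/-- `σ ≻ τ := Σ_{ω ∈ Sh¹(p,q)} ω · (σ × τ)` on basis elements. -/
noncomputable def succB {p q : ℕ} (σ : Equiv.Perm (Fin p)) (τ : Equiv.Perm (Fin q)) :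
    Equiv.Perm (Fin (p + q)) →₀ ℚ :=
  ∑ ω ∈ Finset.univ.filter (Sh1 p q), Finsupp.single (ω * blockSum σ τ) 1

/-- The Malvenuto–Reutenauer product `σ * τ := Σ_{x ∈ Sh(p,q)} x · (σ × τ)` on basis
elements. -/
noncomputable def starB {p q : ℕ} (σ : Equiv.Perm (Fin p)) (τ : Equiv.Perm (Fin q)) :
    Equiv.Perm (Fin (p + q)) →₀ ℚ :=
  ∑ ω ∈ Finset.univ.filter (IsShuffle p q), Finsupp.single (ω * blockSum σ τ) 1

/-- The bilinear extension of `≺` to the homogeneous components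
`ℚ[S_p] = Perm (Fin p) →₀ ℚ` of `ℚ[S_∞]`. -/
noncomputable def precHat {p q : ℕ} (a : Equiv.Perm (Fin p) →₀ ℚ)
    (b : Equiv.Perm (Fin q) →₀ ℚ) : Equiv.Perm (Fin (p + q)) →₀ ℚ :=
  a.sum fun σ c => b.sum fun τ d => (c * d) • precB σ τ

/-- The bilinear extension of `≻`. -/
noncomputable def succHat {p q : ℕ} (a : Equiv.Perm (Fin p) →₀ ℚ)
    (b : Equiv.Perm (Fin q) →₀ ℚ) : Equiv.Perm (Fin (p + q)) →₀ ℚ :=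
  a.sum fun σ c => b.sum fun τ d => (c * d) • succB σ τ

/-- The bilinear extension of the Malvenuto–Reutenauer product `*`. -/
noncomputable def starHat {p q : ℕ} (a : Equiv.Perm (Fin p) →₀ ℚ)
    (b : Equiv.Perm (Fin q) →₀ ℚ) : Equiv.Perm (Fin (p + q)) →₀ ℚ :=
  a.sum fun σ c => b.sum fun τ d => (c * d) • starB σ τ

/-- Transport along an equality of degrees. -/
noncomputable def castF {m n : ℕ} (h : m = n) (a : Equiv.Perm (Fin m) →₀ ℚ) :
    Equiv.Perm (Fin n) →₀ ℚ :=
  Finsupp.equivMapDomain ((finCongr h).permCongr) a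

/-! The coefficient of `π` in `a * b` is `a u * b v`, where `u` and `v` are the standardizations of
the first `p` and the last `q` letters of the word `π(1) … π(p+q)`, because `π` factors uniquely as
a shuffle times an element of `S_p × S_q`. The product `≻` keeps this coefficient when the largest
letter of `π` lies in the last block, and `≺` keeps it otherwise. Cutting a word into three blocks,
both sides of each dendriform relation evaluate to the same product of three coefficients, and the
conditions attached to them agree because comparing the maxima of the blocks is a strict weak
order. -/

section Standardization

variable {n : ℕ} {α : Type*} [LinearOrder α]

/-- The standardization of a word `f 0, …, f (n - 1)`: the permutation whose letters are in the same
relative order as those of `f`, equal letters being ordered from left to right. -/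
def standardization (f : Fin n → α) : Equiv.Perm (Fin n) :=
  (Tuple.sort f)⁻¹

theorem standardization_eq_iff {f : Fin n → α} (hf : f.Injective) {σ : Equiv.Perm (Fin n)} :
    standardization f = σ ↔ StrictMono (f ∘ ⇑σ⁻¹) := by
  rw [standardization, inv_eq_iff_eq_inv, eq_comm, Tuple.eq_sort_iff]
  constructor
  · rintro ⟨hmono, -⟩
    exact hmono.strictMono_of_injective (hf.comp σ⁻¹.injective)
  · exact fun h => ⟨h.monotone, fun i j hij heq => absurd heq (h hij).ne⟩

theorem standardization_lt_standardization_iff {f : Fin n → α} (hf : f.Injective) {i j : Fin n} :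
    standardization f i < standardization f j ↔ f i < f j := by
  have hmono : StrictMono (f ∘ ⇑(standardization f)⁻¹) := (standardization_eq_iff hf).1 rfl
  simpa using (hmono.lt_iff_lt (a := standardization f i) (b := standardization f j)).symm

theorem standardization_perm (π : Equiv.Perm (Fin n)) : standardization π = π := by
  rw [standardization_eq_iff π.injective, ← Equiv.Perm.coe_mul, mul_inv_cancel]
  exact strictMono_id

theorem standardization_comp {m : ℕ} {f : Fin n → α} (hf : f.Injective) {φ : Fin m → Fin n}
    (hφ : φ.Injective) : standardization (standardization f ∘ φ) = standardization (f ∘ φ) := by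
  rw [standardization_eq_iff ((standardization f).injective.comp hφ)]
  have hmono := (standardization_eq_iff (hf.comp hφ)).1 rfl
  exact fun i j hij => (standardization_lt_standardization_iff hf).2 (hmono hij)

theorem finsupp_ext_standardization_append {R : Type*} [Zero R] {p q r : ℕ}
    {a b : Equiv.Perm (Fin (p + q + r)) →₀ R}
    (h : ∀ (u : Fin p → Fin (p + q + r)) (v : Fin q → Fin (p + q + r))
      (w : Fin r → Fin (p + q + r)),
      (Fin.append (Fin.append u v) w).Injective →
        a (standardization (Fin.append (Fin.append u v) w)) =
          b (standardization (Fin.append (Fin.append u v) w))) :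
    a = b := by
  ext π
  have hπ := h (fun i => π ((i.castAdd q).castAdd r)) (fun i => π ((i.natAdd p).castAdd r))
    (fun i => π (i.natAdd (p + q)))
  rw [Fin.append_castAdd_natAdd (f := fun i => π (i.castAdd r)), Fin.append_castAdd_natAdd,
    standardization_perm] at hπ
  exact hπ π.injective

end Standardization

section MaxLT

variable {ι κ μ α : Type*}

/-- The comparison `max f < max g` of two families, phrased without reference to the maxima so that
it makes sense when they do not exist. -/
def MaxLT [LT α] (f : ι → α) (g : κ → α) : Prop :=
  ∃ j, ∀ i, f i < g j

theorem maxLT_comp_equiv [LT α] {ι' κ' : Type*} (f : ι → α) (g : κ → α) (σ : ι' ≃ ι) (τ : κ' ≃ κ) :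
    MaxLT (f ∘ σ) (g ∘ τ) ↔ MaxLT f g :=
  τ.exists_congr fun _ => σ.forall_congr fun _ => Iff.rfl

theorem maxLT_standardization_iff {n : ℕ} [LinearOrder α] {f : Fin n → α} (hf : f.Injective)
    (φ : ι → Fin n) (ψ : κ → Fin n) :
    MaxLT (standardization f ∘ φ) (standardization f ∘ ψ) ↔ MaxLT (f ∘ φ) (f ∘ ψ) := by
  simp only [MaxLT, Function.comp_apply, standardization_lt_standardization_iff hf]

theorem MaxLT.trans [Preorder α] {f : ι → α} {g : κ → α} {h : μ → α} (hfg : MaxLT f g)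
    (hgh : MaxLT g h) : MaxLT f h :=
  let ⟨j, hj⟩ := hfg
  let ⟨k, hk⟩ := hgh
  ⟨k, fun i => (hj i).trans (hk j)⟩

theorem maxLT_append_right [LT α] {p q : ℕ} {f : ι → α} {g : Fin p → α} {h : Fin q → α} :
    MaxLT f (Fin.append g h) ↔ MaxLT f g ∨ MaxLT f h := by
  constructor
  · rintro ⟨j, hj⟩
    induction j using Fin.addCases with
    | left j => exact Or.inl ⟨j, by simpa using hj⟩
    | right j => exact Or.inr ⟨j, by simpa using hj⟩
  · rintro (⟨j, hj⟩ | ⟨j, hj⟩)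
    · exact ⟨Fin.castAdd q j, by simpa using hj⟩
    · exact ⟨Fin.natAdd p j, by simpa using hj⟩

variable [LinearOrder α]

theorem not_maxLT {f : ι → α} {g : κ → α} : ¬ MaxLT f g ↔ ∀ j, ∃ i, g j ≤ f i := by
  simp only [MaxLT, not_exists, not_forall, not_lt]

theorem MaxLT.or_maxLT {f : ι → α} {h : μ → α} (hfh : MaxLT f h) (g : κ → α) :
    MaxLT f g ∨ MaxLT g h := by
  by_contra! hcon
  simp only [not_maxLT] at hcon
  obtain ⟨k, hk⟩ := hfh
  obtain ⟨j, hj⟩ := hcon.2 k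
  obtain ⟨i, hi⟩ := hcon.1 j
  exact (hk i).not_ge (hj.trans hi)

theorem maxLT_append_left {p q : ℕ} {f : Fin p → α} {g : Fin q → α} {h : μ → α} :
    MaxLT (Fin.append f g) h ↔ MaxLT f h ∧ MaxLT g h := by
  simp only [MaxLT, Fin.forall_fin_add, Fin.append_left, Fin.append_right]
  constructor
  · rintro ⟨k, hf, hg⟩
    exact ⟨⟨k, hf⟩, ⟨k, hg⟩⟩
  · rintro ⟨⟨k, hk⟩, ⟨l, hl⟩⟩
    rcases le_total (h k) (h l) with hkl | hlk
    · exact ⟨l, fun i => (hk i).trans_le hkl, hl⟩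
    · exact ⟨k, hk, fun i => (hl i).trans_le hlk⟩

theorem maxLT_blocks_iff {p n : ℕ} {f : Fin (p + (n + 1)) → α} (hf : f.Injective)
    (hmono : Monotone (f ∘ Fin.natAdd p)) :
    MaxLT (f ∘ Fin.castAdd (n + 1)) (f ∘ Fin.natAdd p) ↔
      ∀ i, f i ≤ f (Fin.natAdd p (Fin.last n)) := by
  have hne (i : Fin p) : f (Fin.castAdd (n + 1) i) ≠ f (Fin.natAdd p (Fin.last n)) :=
    hf.ne (by simp only [ne_eq, Fin.ext_iff, Fin.val_castAdd, Fin.val_natAdd]; omega)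
  constructor
  · rintro ⟨j, hj⟩
    exact Fin.addCases (fun i => (hj i).le.trans (hmono j.le_last)) fun i => hmono i.le_last
  · exact fun h => ⟨Fin.last n, fun i => (h _).lt_of_ne (hne i)⟩

theorem not_maxLT_blocks_iff {n q : ℕ} {f : Fin (n + 1 + q) → α}
    (hmono : Monotone (f ∘ Fin.castAdd q)) :
    ¬ MaxLT (f ∘ Fin.castAdd q) (f ∘ Fin.natAdd (n + 1)) ↔
      ∀ i, f i ≤ f (Fin.castAdd q (Fin.last n)) := by
  rw [not_maxLT]
  constructor
  · refine fun h => Fin.addCases (fun i => hmono i.le_last) fun j => ?_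
    obtain ⟨i, hi⟩ := h j
    exact hi.trans (hmono i.le_last)
  · exact fun h j => ⟨Fin.last n, h _⟩

end MaxLT

section Shuffle

variable {p q : ℕ}

theorem isShuffle_iff_strictMono {ω : Equiv.Perm (Fin (p + q))} :
    IsShuffle p q ω ↔ StrictMono (ω ∘ Fin.castAdd q) ∧ StrictMono (ω ∘ Fin.natAdd p) := by
  simp only [IsShuffle, Fin.forall_fin_add, StrictMono, Function.comp_apply, Fin.val_castAdd,
    Fin.val_natAdd, Fin.lt_def]
  grind

theorem mul_blockSum_inv_comp_castAdd (π : Equiv.Perm (Fin (p + q))) (σ : Equiv.Perm (Fin p))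
    (τ : Equiv.Perm (Fin q)) :
    ⇑(π * (blockSum σ τ)⁻¹) ∘ Fin.castAdd q = (π ∘ Fin.castAdd q) ∘ ⇑σ⁻¹ := by
  ext i
  simp [Equiv.Perm.inv_def, blockSum]

theorem mul_blockSum_inv_comp_natAdd (π : Equiv.Perm (Fin (p + q))) (σ : Equiv.Perm (Fin p))
    (τ : Equiv.Perm (Fin q)) :
    ⇑(π * (blockSum σ τ)⁻¹) ∘ Fin.natAdd p = (π ∘ Fin.natAdd p) ∘ ⇑τ⁻¹ := by
  ext i
  simp [Equiv.Perm.inv_def, blockSum]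

theorem isShuffle_mul_blockSum_inv_iff {π : Equiv.Perm (Fin (p + q))} {σ : Equiv.Perm (Fin p)}
    {τ : Equiv.Perm (Fin q)} :
    IsShuffle p q (π * (blockSum σ τ)⁻¹) ↔
      standardization (π ∘ Fin.castAdd q) = σ ∧ standardization (π ∘ Fin.natAdd p) = τ := by
  rw [isShuffle_iff_strictMono, mul_blockSum_inv_comp_castAdd, mul_blockSum_inv_comp_natAdd,
    standardization_eq_iff (π.injective.comp (Fin.castAdd_injective p q)),
    standardization_eq_iff (π.injective.comp (Fin.natAdd_injective q p))]

theorem maxLT_mul_blockSum_inv_iff {π : Equiv.Perm (Fin (p + q))} {σ : Equiv.Perm (Fin p)}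
    {τ : Equiv.Perm (Fin q)} :
    MaxLT (⇑(π * (blockSum σ τ)⁻¹) ∘ Fin.castAdd q) (⇑(π * (blockSum σ τ)⁻¹) ∘ Fin.natAdd p) ↔
      MaxLT (π ∘ Fin.castAdd q) (π ∘ Fin.natAdd p) := by
  rw [mul_blockSum_inv_comp_castAdd, mul_blockSum_inv_comp_natAdd, maxLT_comp_equiv]

theorem perm_forall_le_apply_iff {n : ℕ} (ω : Equiv.Perm (Fin n)) (k : Fin n) :
    (∀ i, ω i ≤ ω k) ↔ (ω k : ℕ) + 1 = n := by
  rw [ω.forall_congr_right (q := fun j => j ≤ ω k)]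
  constructor
  · intro h
    have hlast : n - 1 ≤ (ω k : ℕ) := h ⟨n - 1, Nat.sub_one_lt_of_lt k.isLt⟩
    omega
  · intro h i
    rw [Fin.le_def]
    omega

theorem sh1_iff (hq : 0 < q) {ω : Equiv.Perm (Fin (p + q))} :
    Sh1 p q ω ↔ IsShuffle p q ω ∧ MaxLT (ω ∘ Fin.castAdd q) (ω ∘ Fin.natAdd p) := by
  obtain ⟨n, rfl⟩ := Nat.exists_eq_add_one.2 hq
  refine and_congr_right fun hω => ?_
  rw [maxLT_blocks_iff ω.injective (isShuffle_iff_strictMono.1 hω).2.monotone,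
    perm_forall_le_apply_iff]
  constructor
  · intro h
    rw [h _ (by simp [add_assoc])]
    simp [add_assoc]
  · intro h i hi
    obtain rfl : i = Fin.natAdd p (Fin.last n) := by grind
    grind

theorem sh2_iff (hp : 0 < p) {ω : Equiv.Perm (Fin (p + q))} :
    Sh2 p q ω ↔ IsShuffle p q ω ∧ ¬ MaxLT (ω ∘ Fin.castAdd q) (ω ∘ Fin.natAdd p) := by
  obtain ⟨n, rfl⟩ := Nat.exists_eq_add_one.2 hp
  refine and_congr_right fun hω => ?_
  rw [not_maxLT_blocks_iff (isShuffle_iff_strictMono.1 hω).1.monotone, perm_forall_le_apply_iff]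
  constructor
  · exact fun h => h _ (by simp)
  · intro h i hi
    obtain rfl : i = Fin.castAdd q (Fin.last n) := by grind
    exact h

end Shuffle

section Coefficients

variable {p q : ℕ}

theorem sum_single_mul_right_apply {G R : Type*} [Group G] [Fintype G] [Semiring R] (S : G → Prop)
    (g x : G) :
    ∑ ω ∈ Finset.univ.filter S, Finsupp.single (ω * g) (1 : R) x =
      if S (x * g⁻¹) then 1 else 0 := by
  simp only [Finsupp.single_apply, ← eq_mul_inv_iff_mul_eq,
    Finset.sum_ite_eq', Finset.mem_filter, Finset.mem_univ, true_and]

theorem sum_shuffles_apply {R : Type*} [Semiring R] {S : Equiv.Perm (Fin (p + q)) → Prop}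
    (hS : ∀ ω, S ω → IsShuffle p q ω) (a : Equiv.Perm (Fin p) →₀ R) (b : Equiv.Perm (Fin q) →₀ R)
    (π : Equiv.Perm (Fin (p + q))) :
    (a.sum fun σ c => b.sum fun τ d => (c * d) •
        ∑ ω ∈ Finset.univ.filter S, Finsupp.single (ω * blockSum σ τ) (1 : R)) π =
      if S (π * (blockSum (standardization (π ∘ Fin.castAdd q))
        (standardization (π ∘ Fin.natAdd p)))⁻¹)
      then a (standardization (π ∘ Fin.castAdd q)) * b (standardization (π ∘ Fin.natAdd p))
      else 0 := by
  set u := standardization (π ∘ Fin.castAdd q)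
  set v := standardization (π ∘ Fin.natAdd p)
  have hcoeff (σ τ) : ∑ ω ∈ Finset.univ.filter S, Finsupp.single (ω * blockSum σ τ) (1 : R) π =
      if u = σ ∧ v = τ then if S (π * (blockSum u v)⁻¹) then 1 else 0 else 0 := by
    rw [sum_single_mul_right_apply]
    by_cases huv : u = σ ∧ v = τ
    · rw [if_pos huv, huv.1, huv.2]
    · rw [if_neg huv, if_neg fun h => huv (isShuffle_mul_blockSum_inv_iff.1 (hS _ h))]
  simp [Finsupp.sum_fintype, Finsupp.finsetSum_apply, hcoeff, ite_and]

theorem starHat_apply (a : Equiv.Perm (Fin p) →₀ ℚ) (b : Equiv.Perm (Fin q) →₀ ℚ)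
    (π : Equiv.Perm (Fin (p + q))) :
    starHat a b π =
      a (standardization (π ∘ Fin.castAdd q)) * b (standardization (π ∘ Fin.natAdd p)) := by
  refine (sum_shuffles_apply (fun _ => id) a b π).trans (if_pos ?_)
  exact isShuffle_mul_blockSum_inv_iff.2 ⟨rfl, rfl⟩

theorem precHat_apply (hp : 0 < p) (a : Equiv.Perm (Fin p) →₀ ℚ) (b : Equiv.Perm (Fin q) →₀ ℚ)
    (π : Equiv.Perm (Fin (p + q))) :
    precHat a b π = if MaxLT (π ∘ Fin.castAdd q) (π ∘ Fin.natAdd p) then 0 else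
      a (standardization (π ∘ Fin.castAdd q)) * b (standardization (π ∘ Fin.natAdd p)) := by
  refine (sum_shuffles_apply (S := Sh2 p q) (fun _ => And.left) a b π).trans ?_
  simp only [sh2_iff hp, isShuffle_mul_blockSum_inv_iff.2 ⟨rfl, rfl⟩, maxLT_mul_blockSum_inv_iff,
    true_and, ite_not]

theorem succHat_apply (hq : 0 < q) (a : Equiv.Perm (Fin p) →₀ ℚ) (b : Equiv.Perm (Fin q) →₀ ℚ)
    (π : Equiv.Perm (Fin (p + q))) :
    succHat a b π = if MaxLT (π ∘ Fin.castAdd q) (π ∘ Fin.natAdd p) then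
      a (standardization (π ∘ Fin.castAdd q)) * b (standardization (π ∘ Fin.natAdd p)) else 0 := by
  refine (sum_shuffles_apply (S := Sh1 p q) (fun _ => And.left) a b π).trans ?_
  simp only [sh1_iff hq, isShuffle_mul_blockSum_inv_iff.2 ⟨rfl, rfl⟩, maxLT_mul_blockSum_inv_iff,
    true_and]

variable {α : Type*} [LinearOrder α] {u : Fin p → α} {v : Fin q → α}

theorem precHat_standardization_append (hp : 0 < p) (huv : (Fin.append u v).Injective)
    (a : Equiv.Perm (Fin p) →₀ ℚ) (b : Equiv.Perm (Fin q) →₀ ℚ) :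
    precHat a b (standardization (Fin.append u v)) =
      if MaxLT u v then 0 else a (standardization u) * b (standardization v) := by
  rw [precHat_apply hp, standardization_comp huv (Fin.castAdd_injective p q),
    standardization_comp huv (Fin.natAdd_injective q p), maxLT_standardization_iff huv]
  simp only [Function.comp_def, Fin.append_left, Fin.append_right]

theorem succHat_standardization_append (hq : 0 < q) (huv : (Fin.append u v).Injective)
    (a : Equiv.Perm (Fin p) →₀ ℚ) (b : Equiv.Perm (Fin q) →₀ ℚ) :
    succHat a b (standardization (Fin.append u v)) =
      if MaxLT u v then a (standardization u) * b (standardization v) else 0 := by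
  rw [succHat_apply hq, standardization_comp huv (Fin.castAdd_injective p q),
    standardization_comp huv (Fin.natAdd_injective q p), maxLT_standardization_iff huv]
  simp only [Function.comp_def, Fin.append_left, Fin.append_right]

theorem castF_standardization {m n : ℕ} (h : m = n) (a : Equiv.Perm (Fin m) →₀ ℚ) (f : Fin m → α) :
    castF h a (standardization (f ∘ Fin.cast h.symm)) = a (standardization f) := by
  subst h
  rfl

end Coefficients

section Dendriform

variable {p q r : ℕ}

theorem starHat_eq_precHat_add_succHat (hp : 0 < p) (hq : 0 < q) (a : Equiv.Perm (Fin p) →₀ ℚ)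
    (b : Equiv.Perm (Fin q) →₀ ℚ) : starHat a b = precHat a b + succHat a b := by
  ext π
  rw [Finsupp.add_apply, starHat_apply, precHat_apply hp, succHat_apply hq]
  split_ifs <;> simp

variable {α : Type*} {u : Fin p → α} {v : Fin q → α} {w : Fin r → α}

theorem castF_standardization_append [LinearOrder α] (a : Equiv.Perm (Fin (p + (q + r))) →₀ ℚ) :
    castF (add_assoc p q r).symm a (standardization (Fin.append (Fin.append u v) w)) =
      a (standardization (Fin.append u (Fin.append v w))) := by
  rw [Fin.append_assoc, castF_standardization]

theorem injective_append_blocks (h : (Fin.append (Fin.append u v) w).Injective) :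
    (Fin.append u v).Injective ∧ (Fin.append v w).Injective ∧
      (Fin.append u (Fin.append v w)).Injective := by
  have hassoc : (Fin.append u (Fin.append v w)).Injective := by
    rw [Fin.append_assoc] at h
    exact ((finCongr (add_assoc p q r)).injective_comp _).1 h
  exact ⟨(Fin.append_injective_iff.1 h).1, (Fin.append_injective_iff.1 hassoc).2.1, hassoc⟩

theorem precHat_precHat (hp : 0 < p) (hq : 0 < q) (hr : 0 < r) (a : Equiv.Perm (Fin p) →₀ ℚ)
    (b : Equiv.Perm (Fin q) →₀ ℚ) (c : Equiv.Perm (Fin r) →₀ ℚ) :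
    precHat (precHat a b) c =
      castF (add_assoc p q r).symm (precHat a (precHat b c) + precHat a (succHat b c)) := by
  refine finsupp_ext_standardization_append fun u v w huv_w => ?_
  obtain ⟨huv, hvw, hu_vw⟩ := injective_append_blocks huv_w
  have hor : MaxLT u w → MaxLT u v ∨ MaxLT v w := fun h => h.or_maxLT v
  rw [castF_standardization_append, Finsupp.add_apply,
    precHat_standardization_append (Nat.add_pos_left hp q) huv_w,
    precHat_standardization_append hp huv,
    precHat_standardization_append hp hu_vw, precHat_standardization_append hp hu_vw,
    precHat_standardization_append hq hvw, succHat_standardization_append hr hvw,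
    maxLT_append_left, maxLT_append_right]
  split_ifs <;> grind

theorem succHat_precHat (hp : 0 < p) (hq : 0 < q) (a : Equiv.Perm (Fin p) →₀ ℚ)
    (b : Equiv.Perm (Fin q) →₀ ℚ) (c : Equiv.Perm (Fin r) →₀ ℚ) :
    castF (add_assoc p q r).symm (succHat a (precHat b c)) = precHat (succHat a b) c := by
  refine finsupp_ext_standardization_append fun u v w huv_w => ?_
  obtain ⟨huv, hvw, hu_vw⟩ := injective_append_blocks huv_w
  have htrans : MaxLT u v → MaxLT v w → MaxLT u w := MaxLT.trans
  have hor : MaxLT u w → MaxLT u v ∨ MaxLT v w := fun h => h.or_maxLT v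
  rw [castF_standardization_append, succHat_standardization_append (Nat.add_pos_left hq r) hu_vw,
    precHat_standardization_append hq hvw,
    precHat_standardization_append (Nat.add_pos_left hp q) huv_w,
    succHat_standardization_append hq huv, maxLT_append_left, maxLT_append_right]
  split_ifs <;> grind

theorem succHat_succHat (hp : 0 < p) (hq : 0 < q) (hr : 0 < r) (a : Equiv.Perm (Fin p) →₀ ℚ)
    (b : Equiv.Perm (Fin q) →₀ ℚ) (c : Equiv.Perm (Fin r) →₀ ℚ) :
    castF (add_assoc p q r).symm (succHat a (succHat b c)) =
      succHat (precHat a b) c + succHat (succHat a b) c := by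
  refine finsupp_ext_standardization_append fun u v w huv_w => ?_
  obtain ⟨huv, hvw, hu_vw⟩ := injective_append_blocks huv_w
  have htrans : MaxLT u v → MaxLT v w → MaxLT u w := MaxLT.trans
  rw [castF_standardization_append, succHat_standardization_append (Nat.add_pos_left hq r) hu_vw,
    succHat_standardization_append hr hvw, Finsupp.add_apply,
    succHat_standardization_append hr huv_w, succHat_standardization_append hr huv_w,
    precHat_standardization_append hp huv, succHat_standardization_append hq huv,
    maxLT_append_left, maxLT_append_right]
  split_ifs <;> grind

end Dendriform

/-- Proposition 4.5: on the augmentation ideal `⊕_{n≥1} ℚ[Sₙ]` of the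
Malvenuto–Reutenauer algebra (whose elements are, degreewise, the `a ∈ ℚ[S_p]` with
`p ≥ 1`, the products `≺` and `≻` being extended bilinearly), the dendriform relations
hold: `(a≺b)≺c = a≺(b≺c) + a≺(b≻c)`, `a≻(b≺c) = (a≻b)≺c`,
`a≻(b≻c) = (a≺b)≻c + (a≻b)≻c`; moreover `x * y = x≺y + x≻y`. -/
theorem stmt10 (p q r : ℕ) (hp : 1 ≤ p) (hq : 1 ≤ q) (hr : 1 ≤ r)
    (a : Equiv.Perm (Fin p) →₀ ℚ) (b : Equiv.Perm (Fin q) →₀ ℚ)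
    (c : Equiv.Perm (Fin r) →₀ ℚ) :
    (precHat (precHat a b) c =
      castF (by omega : p + (q + r) = p + q + r)
        (precHat a (precHat b c) + precHat a (succHat b c))) ∧
    (castF (by omega : p + (q + r) = p + q + r) (succHat a (precHat b c)) =
      precHat (succHat a b) c) ∧
    (castF (by omega : p + (q + r) = p + q + r) (succHat a (succHat b c)) =
      succHat (precHat a b) c + succHat (succHat a b) c) ∧
    (∀ (m n : ℕ), 1 ≤ m → 1 ≤ n →
      ∀ (x : Equiv.Perm (Fin m) →₀ ℚ) (y : Equiv.Perm (Fin n) →₀ ℚ),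
        starHat x y = precHat x y + succHat x y) := by
  exact ⟨precHat_precHat hp hq hr a b c, succHat_precHat hp hq a b c,
    succHat_succHat hp hq hr a b c,
    fun _ _ hm hn x y => starHat_eq_precHat_add_succHat hm hn x y⟩
end

section
/- Let (W,S) be a finite Coxeter system, J ⊆ S, and let x_J^0 ∈ X_J be defined by the unique factorization w^0 = x_J^0 · w_J^0 of the longest element w^0 of W with x_J^0 ∈ X_J and w_J^0 ∈ W_J. Then X_J = {w ∈ W : w ≤ x_J^0} for the weak Bruhat order on W. -/
/-!
Call a reflection `t` an inversion of `w` if `l (w * t) < l w`. Letting `W` act on `W × ZMod 2` by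
conjugation on the first factor and counting inversions modulo `2` on the second shows that `t` is
an inversion of `u * v` iff exactly one of the following holds: `t` is an inversion of `v`, or
`v * t * v⁻¹` is an inversion of `u`. Consequently lengths add in `u * v` as soon as no right
inversion of `u` is a left inversion of `v`. This criterion is applied twice. Every reflection is
an inversion of `w⁰`, so every element lies below `w⁰` in the weak order. And an element of
minimal length in its coset `w * W_J` has no inversion in `W_J`, which gives
`l (x * y) = l x + l y` for `x ∈ X_J` and `y ∈ W_J`. For `w ∈ X_J`, cancelling `w_J⁰` in
`w * w_J⁰ ≤ w⁰ = x_J⁰ * w_J⁰` yields `w ≤ x_J⁰`.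
-/

section

open CoxeterSystem

variable {B W : Type*} [Group W] {M : CoxeterMatrix B} (cs : CoxeterSystem M W)

open Classical in
/-- The action of the simple reflection `s i` on `W × ZMod 2`: conjugation on the first component,
while the second component is switched exactly at `s i`. Extending this to an action of `W`
counts modulo `2` how often a reflection occurs in the inversion sequence of a word. -/
noncomputable def simpleParityAction (i : B) : Function.End (W × ZMod 2) :=
  fun p ↦ (cs.simple i * p.1 * cs.simple i, p.2 + if p.1 = cs.simple i then 1 else 0)

theorem inv_simple_mul_simple_pow_mul_simple (i j : B) (m : ℕ) :
    ((cs.simple i * cs.simple j) ^ m)⁻¹ * cs.simple j =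
      cs.simple j * (cs.simple i * cs.simple j) ^ m := by
  have conj_inv : SemiconjBy (cs.simple j) (cs.simple i * cs.simple j)
      (cs.simple i * cs.simple j)⁻¹ := by
    simp [SemiconjBy, mul_assoc]
  rw [← inv_pow, (conj_inv.pow_right m).eq]

open Classical in
theorem simpleParityAction_mul_pow_apply (i j : B) (m : ℕ) (t : W) (e : ZMod 2) :
    ((simpleParityAction cs i * simpleParityAction cs j) ^ m) (t, e) =
      ((cs.simple i * cs.simple j) ^ m * t * ((cs.simple i * cs.simple j) ^ m)⁻¹,
        e + ∑ k ∈ Finset.range (2 * m),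
          if t = cs.simple j * (cs.simple i * cs.simple j) ^ k then 1 else 0) := by
  induction m with
  | zero => simp [Function.End.one_def]
  | succ m ih =>
    have step : ((simpleParityAction cs i * simpleParityAction cs j) ^ (m + 1)) (t, e) =
        simpleParityAction cs i (simpleParityAction cs j
          (((simpleParityAction cs i * simpleParityAction cs j) ^ m) (t, e))) := by
      rw [pow_succ']; rfl
    have pow_conj := inv_simple_mul_simple_pow_mul_simple cs i j m
    have pow_add_pow := pow_add (cs.simple i * cs.simple j) m m
    rw [step, ih, pow_succ', mul_add_one 2 m, Finset.sum_range_succ, Finset.sum_range_succ,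
      two_mul, pow_succ', pow_add_pow]
    set c := (cs.simple i * cs.simple j) ^ m
    have conj_eq_iff (d : W) :
        c * t * c⁻¹ = cs.simple j * d ↔ t = cs.simple j * (c * d * c) := by
      rw [mul_inv_eq_iff_eq_mul, ← eq_inv_mul_iff_mul_eq, mul_assoc, ← mul_assoc c⁻¹, pow_conj]
      simp only [mul_assoc]
    have first_switch : c * t * c⁻¹ = cs.simple j ↔ t = cs.simple j * (c * c) := by
      simpa using conj_eq_iff 1
    have second_switch : cs.simple j * (c * t * c⁻¹) * cs.simple j = cs.simple i ↔
        t = cs.simple j * (cs.simple i * cs.simple j * (c * c)) := by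
      rw [← mul_assoc _ c c, (Commute.self_pow (cs.simple i * cs.simple j) m).eq, ← conj_eq_iff,
        ← eq_mul_inv_iff_mul_eq, ← eq_inv_mul_iff_mul_eq, inv_simple]
    simp only [simpleParityAction, first_switch, second_switch]
    simp [mul_assoc, add_assoc]

theorem isLiftable_simpleParityAction : M.IsLiftable (simpleParityAction cs) := by
  classical
  intro i j
  funext ⟨t, e⟩
  have sum_eq_zero : ∑ k ∈ Finset.range (2 * M i j),
      (if t = cs.simple j * (cs.simple i * cs.simple j) ^ k then 1 else 0 : ZMod 2) = 0 := by
    -- The summand has period `M i j` in `k`, so the two halves of the sum agree.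
    rw [two_mul, Finset.sum_range_add]
    simp only [pow_add, simple_mul_simple_pow, one_mul]
    exact CharTwo.add_self_eq_zero _
  rw [simpleParityAction_mul_pow_apply, sum_eq_zero, simple_mul_simple_pow]
  simp [Function.End.one_def]

/-- The action of `W` on `W × ZMod 2` extending `simpleParityAction`. -/
noncomputable def parityAction : W →* Function.End (W × ZMod 2) :=
  cs.lift ⟨simpleParityAction cs, isLiftable_simpleParityAction cs⟩

/-- The number of occurrences of `t` in the right inversion sequence of any word for `w`,
modulo `2`. It is read off from `parityAction`, so that it visibly depends on `w` only. -/
noncomputable def inversionParity (w t : W) : ZMod 2 := (parityAction cs w (t, 0)).2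

theorem parityAction_simple (i : B) : parityAction cs (cs.simple i) = simpleParityAction cs i :=
  cs.lift_apply_simple (isLiftable_simpleParityAction cs) i

theorem parityAction_mul_apply (u v : W) (p : W × ZMod 2) :
    parityAction cs (u * v) p = parityAction cs u (parityAction cs v p) := by
  rw [map_mul]; rfl

theorem parityAction_apply (w t : W) (e : ZMod 2) :
    parityAction cs w (t, e) = (w * t * w⁻¹, e + inversionParity cs w t) := by
  induction w using cs.simple_induction_left generalizing t e with
  | one => simp [inversionParity, Function.End.one_def]
  | mul_simple_left w i ih =>
    rw [inversionParity, parityAction_mul_apply, parityAction_mul_apply, ih, ih,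
      parityAction_simple]
    simp [simpleParityAction, mul_assoc, add_assoc]

open Classical in
theorem inversionParity_simple (i : B) (t : W) :
    inversionParity cs (cs.simple i) t = if t = cs.simple i then 1 else 0 := by
  simp [inversionParity, parityAction_simple, simpleParityAction]

theorem inversionParity_one (t : W) : inversionParity cs 1 t = 0 := by
  simp [inversionParity, Function.End.one_def]

theorem inversionParity_mul (u v t : W) :
    inversionParity cs (u * v) t =
      inversionParity cs v t + inversionParity cs u (v * t * v⁻¹) := by
  rw [inversionParity, parityAction_mul_apply, parityAction_apply, parityAction_apply, zero_add]

variable {cs}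

theorem inversionParity_self {t : W} (ht : cs.IsReflection t) : inversionParity cs t t = 1 := by
  obtain ⟨v, i, rfl⟩ := ht
  have conj_cancel : v⁻¹ * (v * cs.simple i * v⁻¹) * v⁻¹⁻¹ = cs.simple i := by group
  have parity_inv := inversionParity_mul cs v v⁻¹ (v * cs.simple i * v⁻¹)
  rw [mul_inv_cancel, inversionParity_one, conj_cancel] at parity_inv
  rw [inversionParity_mul, conj_cancel, inversionParity_mul, mul_inv_cancel_right,
    inversionParity_simple, if_pos rfl]
  linear_combination -parity_inv

theorem mem_rightInvSeq_of_inversionParity_ne_zero {ω : List B} {t : W}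
    (h : inversionParity cs (cs.wordProd ω) t ≠ 0) : t ∈ cs.rightInvSeq ω := by
  classical
  induction ω with
  | nil => simp [inversionParity_one] at h
  | cons i ω ih =>
    rw [rightInvSeq, List.mem_cons, or_iff_not_imp_right]
    intro t_not_mem
    rw [wordProd_cons, inversionParity_mul, not_not.mp (mt ih t_not_mem), zero_add,
      inversionParity_simple, ne_eq, ite_eq_right_iff, Classical.not_imp] at h
    rw [← h.1]
    group

theorem isRightInversion_of_inversionParity_ne_zero {w t : W} (h : inversionParity cs w t ≠ 0) :
    cs.IsRightInversion w t := by
  obtain ⟨ω, hω, rfl⟩ := cs.exists_isReduced w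
  exact cs.isRightInversion_of_mem_rightInvSeq hω (mem_rightInvSeq_of_inversionParity_ne_zero h)

theorem inversionParity_ne_zero_iff {w t : W} :
    inversionParity cs w t ≠ 0 ↔ cs.IsRightInversion w t := by
  refine ⟨isRightInversion_of_inversionParity_ne_zero, fun ht parity_zero ↦ ?_⟩
  have parity_mul : inversionParity cs (w * t) t ≠ 0 := by
    rw [inversionParity_mul, inversionParity_self ht.1, mul_inv_cancel_right, parity_zero]
    decide
  exact ht.1.isRightInversion_mul_left_iff.mp
    (isRightInversion_of_inversionParity_ne_zero parity_mul) ht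

theorem isRightInversion_mul_iff {u v t : W} :
    cs.IsRightInversion (u * v) t ↔
      Xor (cs.IsRightInversion v t) (cs.IsRightInversion u (v * t * v⁻¹)) := by
  have add_ne_zero_iff : ∀ a b : ZMod 2, a + b ≠ 0 ↔ Xor (a ≠ 0) (b ≠ 0) := by
    unfold Xor
    decide
  simp only [← inversionParity_ne_zero_iff, inversionParity_mul, add_ne_zero_iff]

theorem mem_rightInvSeq_of_isRightInversion {ω : List B} {t : W}
    (ht : cs.IsRightInversion (cs.wordProd ω) t) : t ∈ cs.rightInvSeq ω :=
  mem_rightInvSeq_of_inversionParity_ne_zero (inversionParity_ne_zero_iff.mpr ht)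

theorem exists_wordProd_mul_eq_wordProd_eraseIdx {ω : List B} {t : W}
    (ht : cs.IsRightInversion (cs.wordProd ω) t) :
    ∃ j < ω.length, cs.wordProd ω * t = cs.wordProd (ω.eraseIdx j) := by
  obtain ⟨j, hj, rfl⟩ := List.mem_iff_getElem.mp (mem_rightInvSeq_of_isRightInversion ht)
  refine ⟨j, by simpa using hj, ?_⟩
  rw [← List.getD_eq_getElem _ 1 hj, wordProd_mul_getD_rightInvSeq]

variable (cs) in
theorem exists_isReduced_sublist (ω : List B) :
    ∃ ω', ω'.Sublist ω ∧ cs.IsReduced ω' ∧ cs.wordProd ω' = cs.wordProd ω := by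
  induction ω using List.reverseRecOn with
  | nil => exact ⟨[], List.Sublist.slnil, by simp [CoxeterSystem.IsReduced], rfl⟩
  | append_singleton ω i ih =>
    obtain ⟨ω', sublist, reduced, prod_eq⟩ := ih
    rw [wordProd_append, ← prod_eq, wordProd_singleton]
    by_cases descent : cs.IsRightDescent (cs.wordProd ω') i
    · obtain ⟨j, hj, erase_eq⟩ := exists_wordProd_mul_eq_wordProd_eraseIdx
        ((cs.isRightInversion_simple_iff_isRightDescent _ i).mpr descent)
      refine ⟨ω'.eraseIdx j, ?_, ?_, erase_eq.symm⟩
      · exact (ω'.eraseIdx_sublist j).trans (sublist.trans (List.sublist_append_left ω [i]))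
      · have length_erase := List.length_eraseIdx_add_one hj
        have length_prod := cs.isRightDescent_iff.mp descent
        rw [erase_eq, reduced.eq] at length_prod
        exact Nat.add_right_cancel (length_prod.trans length_erase.symm)
    · refine ⟨ω' ++ [i], sublist.append_right [i], ?_, by simp [wordProd_append]⟩
      rw [CoxeterSystem.IsReduced, wordProd_append, wordProd_singleton,
        cs.not_isRightDescent_iff.mp descent, reduced.eq, List.length_append, List.length_singleton]

theorem length_mul_wordProd_of_forall_not_isRightInversion {u : W} {ω : List B}
    (hω : cs.IsReduced ω) (h : ∀ t ∈ cs.leftInvSeq ω, ¬ cs.IsRightInversion u t) :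
    cs.length (u * cs.wordProd ω) = cs.length u + cs.length (cs.wordProd ω) := by
  induction ω using List.reverseRecOn with
  | nil => simp
  | append_singleton ω i ih =>
    have reduced : cs.IsReduced ω := by simpa using hω.take ω.length
    rw [← List.concat_eq_append] at hω h ⊢
    rw [leftInvSeq_concat, List.concat_eq_append, List.forall_mem_append,
      List.forall_mem_singleton] at h
    rw [wordProd_concat]
    have length_eq := ih reduced h.1
    have length_prod :
        cs.length (cs.wordProd ω * cs.simple i) = cs.length (cs.wordProd ω) + 1 := by
      rw [← wordProd_concat, hω.eq, reduced.eq, List.length_concat]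
    have not_descent : ¬ cs.IsRightDescent (u * cs.wordProd ω) i := by
      rw [← isRightInversion_simple_iff_isRightDescent, isRightInversion_mul_iff,
        isRightInversion_simple_iff_isRightDescent]
      simp [Xor, h.2, cs.not_isRightDescent_iff.mpr length_prod]
    rw [← mul_assoc, cs.not_isRightDescent_iff.mp not_descent, length_eq, length_prod, add_assoc]

theorem length_mul_of_disjoint_inversions {u v : W}
    (h : ∀ t, cs.IsLeftInversion v t → ¬ cs.IsRightInversion u t) :
    cs.length (u * v) = cs.length u + cs.length v := by
  obtain ⟨ω, hω, rfl⟩ := cs.exists_isReduced v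
  exact length_mul_wordProd_of_forall_not_isRightInversion hω fun t ht ↦
    h t (cs.isLeftInversion_of_mem_leftInvSeq hω ht)

theorem isLeftInversion_iff_isRightInversion_conj {w t : W} :
    cs.IsLeftInversion w t ↔ cs.IsRightInversion w (w⁻¹ * t * w) := by
  have isReflection_iff := cs.isReflection_conj_iff w⁻¹ t
  rw [inv_inv] at isReflection_iff
  rw [IsLeftInversion, IsRightInversion, isReflection_iff, mul_assoc, mul_inv_cancel_left]

variable (cs) in
/-- The weak Bruhat order on `W`: some reduced word of the larger element ends in a reduced word
of the smaller one. -/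
def WeakLE (x x' : W) : Prop :=
  ∃ y, x' = y * x ∧ cs.length x' = cs.length y + cs.length x

variable (cs) in
/-- The standard parabolic subgroup `W_J`. -/
def parabolicSubgroup (J : Set B) : Subgroup W := Subgroup.closure (cs.simple '' J)

variable (cs) in
/-- The set `X_J` of elements with no right descent in `J`; they turn out to be the elements of
minimal length in the cosets `w * W_J`. -/
def minCosetReps (J : Set B) : Set W := {w | ∀ i ∈ J, cs.length w < cs.length (w * cs.simple i)}

theorem WeakLE.of_mul_right {x x' v : W} (h : WeakLE cs (x * v) (x' * v))
    (hx : cs.length (x * v) = cs.length x + cs.length v)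
    (hx' : cs.length (x' * v) = cs.length x' + cs.length v) : WeakLE cs x x' := by
  obtain ⟨y, eq_mul, length_eq⟩ := h
  refine ⟨y, mul_right_cancel (eq_mul.trans (mul_assoc y x v).symm), ?_⟩
  omega

theorem WeakLE.mem_minCosetReps {J : Set B} {x x' : W} (h : WeakLE cs x x')
    (hx' : x' ∈ minCosetReps cs J) : x ∈ minCosetReps cs J := by
  obtain ⟨y, rfl, length_eq⟩ := h
  intro i hi
  have length_lt := hx' i hi
  have length_le := cs.length_mul_le y (x * cs.simple i)
  rw [mul_assoc] at length_lt
  omega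

theorem isRightInversion_of_forall_length_le {w₀ t : W} (hw₀ : ∀ w, cs.length w ≤ cs.length w₀)
    (ht : cs.IsReflection t) : cs.IsRightInversion w₀ t :=
  ⟨ht, (hw₀ _).lt_of_ne (ht.length_mul_left_ne w₀)⟩

theorem weakLE_of_forall_length_le {w₀ : W} (hw₀ : ∀ w, cs.length w ≤ cs.length w₀) (w : W) :
    WeakLE cs w w₀ := by
  refine ⟨w₀ * w⁻¹, by group, ?_⟩
  have disjoint : ∀ t, cs.IsLeftInversion w t → ¬ cs.IsRightInversion (w₀ * w⁻¹) t := by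
    intro t left_inv right_inv
    have inv_w := isLeftInversion_iff_isRightInversion_conj.mp left_inv
    have inv_w₀ := isRightInversion_of_forall_length_le hw₀ inv_w.1
    rw [← inv_mul_cancel_right w₀ w, isRightInversion_mul_iff] at inv_w₀
    have conj_cancel : w * (w⁻¹ * t * w) * w⁻¹ = t := by group
    simp [Xor, inv_w, right_inv, conj_cancel] at inv_w₀
  simpa using length_mul_of_disjoint_inversions disjoint

theorem simple_mem_parabolicSubgroup {J : Set B} {i : B} (hi : i ∈ J) :
    cs.simple i ∈ parabolicSubgroup cs J :=
  Subgroup.subset_closure (Set.mem_image_of_mem cs.simple hi)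

theorem exists_wordProd_eq_of_mem_parabolicSubgroup {J : Set B} {u : W}
    (hu : u ∈ parabolicSubgroup cs J) : ∃ ω : List B, (∀ i ∈ ω, i ∈ J) ∧ cs.wordProd ω = u := by
  induction hu using Subgroup.closure_induction with
  | mem x hx =>
    obtain ⟨i, hi, rfl⟩ := hx
    exact ⟨[i], by simpa using hi, by simp⟩
  | one => exact ⟨[], by simp, by simp⟩
  | mul x y _ _ hx hy =>
    obtain ⟨ω, hω, rfl⟩ := hx
    obtain ⟨ω', hω', rfl⟩ := hy
    exact ⟨ω ++ ω', List.forall_mem_append.mpr ⟨hω, hω'⟩, cs.wordProd_append ω ω'⟩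
  | inv x _ hx =>
    obtain ⟨ω, hω, rfl⟩ := hx
    exact ⟨ω.reverse, by simpa using hω, cs.wordProd_reverse ω⟩

theorem exists_isReduced_of_mem_parabolicSubgroup {J : Set B} {u : W}
    (hu : u ∈ parabolicSubgroup cs J) :
    ∃ ω : List B, (∀ i ∈ ω, i ∈ J) ∧ cs.IsReduced ω ∧ cs.wordProd ω = u := by
  obtain ⟨ω, hω, rfl⟩ := exists_wordProd_eq_of_mem_parabolicSubgroup hu
  obtain ⟨ω', sublist, reduced, prod_eq⟩ := exists_isReduced_sublist cs ω
  exact ⟨ω', fun i hi ↦ hω i (sublist.subset hi), reduced, prod_eq⟩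

theorem mem_parabolicSubgroup_of_mem_leftInvSeq {J : Set B} {ω : List B} (hω : ∀ i ∈ ω, i ∈ J)
    {t : W} (ht : t ∈ cs.leftInvSeq ω) : t ∈ parabolicSubgroup cs J := by
  induction ω generalizing t with
  | nil => simp at ht
  | cons i ω ih =>
    have simple_mem := simple_mem_parabolicSubgroup (cs := cs) (hω i List.mem_cons_self)
    rw [leftInvSeq, List.mem_cons, List.mem_map] at ht
    obtain rfl | ⟨t, ht, rfl⟩ := ht
    · exact simple_mem
    · have t_mem := ih (fun k hk ↦ hω k (List.mem_cons_of_mem i hk)) ht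
      exact mul_mem (mul_mem simple_mem t_mem) (inv_mem simple_mem)

theorem exists_isRightDescent_of_mem_parabolicSubgroup {J : Set B} {u : W}
    (hu : u ∈ parabolicSubgroup cs J) (hu_ne : u ≠ 1) : ∃ i ∈ J, cs.IsRightDescent u i := by
  obtain ⟨ω, hω, reduced, rfl⟩ := exists_isReduced_of_mem_parabolicSubgroup hu
  obtain rfl | ⟨ω, i, rfl⟩ := List.eq_nil_or_concat ω
  · simp at hu_ne
  · refine ⟨i, hω i (by simp), ?_⟩
    have length_le := cs.length_wordProd_le ω
    rw [IsRightDescent, reduced.eq, wordProd_concat, simple_mul_simple_cancel_right,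
      List.length_concat]
    omega

theorem length_mul_of_forall_length_le_mul {J : Set B} {x u : W}
    (hx : ∀ v ∈ parabolicSubgroup cs J, cs.length x ≤ cs.length (x * v))
    (hu : u ∈ parabolicSubgroup cs J) : cs.length (x * u) = cs.length x + cs.length u := by
  obtain ⟨ω, hω, reduced, rfl⟩ := exists_isReduced_of_mem_parabolicSubgroup hu
  refine length_mul_wordProd_of_forall_not_isRightInversion reduced fun t ht right_inv ↦ ?_
  exact (hx t (mem_parabolicSubgroup_of_mem_leftInvSeq hω ht)).not_gt right_inv.2

variable (cs) in
theorem exists_mem_parabolicSubgroup_forall_length_le (J : Set B) (w : W) :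
    ∃ v ∈ parabolicSubgroup cs J, ∀ u ∈ parabolicSubgroup cs J,
      cs.length (w * v) ≤ cs.length (w * v * u) := by
  let cosetLength (v : parabolicSubgroup cs J) : ℕ := cs.length (w * v)
  let v := Function.argmin cosetLength
  refine ⟨v, v.2, fun u hu ↦ ?_⟩
  simpa [cosetLength, mul_assoc] using Function.argmin_le cosetLength (v * ⟨u, hu⟩)

theorem length_le_mul_of_mem_minCosetReps {J : Set B} {x u : W} (hx : x ∈ minCosetReps cs J)
    (hu : u ∈ parabolicSubgroup cs J) : cs.length x ≤ cs.length (x * u) := by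
  obtain ⟨v, hv, minimal⟩ := exists_mem_parabolicSubgroup_forall_length_le cs J x
  suffices v_eq : v = 1 by simpa [v_eq] using minimal u hu
  by_contra v_ne
  obtain ⟨i, hi, descent⟩ :=
    exists_isRightDescent_of_mem_parabolicSubgroup (inv_mem hv) (inv_ne_one.mpr v_ne)
  have length_x := length_mul_of_forall_length_le_mul minimal (inv_mem hv)
  have length_mul_simple := length_mul_of_forall_length_le_mul minimal
    (mul_mem (inv_mem hv) (simple_mem_parabolicSubgroup hi))
  rw [← mul_assoc, mul_inv_cancel_right] at length_mul_simple
  rw [mul_inv_cancel_right] at length_x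
  have length_lt := hx i hi
  rw [IsRightDescent] at descent
  omega

theorem length_mul_of_mem_minCosetReps {J : Set B} {x u : W} (hx : x ∈ minCosetReps cs J)
    (hu : u ∈ parabolicSubgroup cs J) : cs.length (x * u) = cs.length x + cs.length u :=
  length_mul_of_forall_length_le_mul (fun _ ↦ length_le_mul_of_mem_minCosetReps hx) hu

end

/-- Corollary A.4: let `(W, S)` be a finite Coxeter system (encoded by a
Coxeter matrix `M` indexed by `B`, so `S = {cs.simple i : i ∈ B}` and `J ⊆ S` is encoded
by a set `J ⊆ B`), with length function `l = cs.length` and weak Bruhat order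
`x ≤ x' ↔ ∃ y, x' = y·x ∧ l(x') = l(y) + l(x)`.  Let `w⁰` be the longest element of `W`,
and let `w⁰ = x_J⁰ · w_J⁰` be its (unique) factorization with
`x_J⁰ ∈ X_J = {w : l(w·s) > l(w) for all s ∈ J}` and `w_J⁰ ∈ W_J` (the standard parabolic
subgroup generated by `J`).  Then `X_J = {w ∈ W : w ≤ x_J⁰}`. -/
theorem stmt19 {B : Type*} {W : Type*} [Group W] [Fintype W] {M : CoxeterMatrix B}
    (cs : CoxeterSystem M W) (J : Set B)
    (w0 : W) (hw0 : ∀ w : W, cs.length w ≤ cs.length w0)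
    (xJ0 wJ0 : W)
    (hxJ0 : ∀ i ∈ J, cs.length xJ0 < cs.length (xJ0 * cs.simple i))
    (hwJ0 : wJ0 ∈ Subgroup.closure (cs.simple '' J))
    (hfact : w0 = xJ0 * wJ0) :
    ∀ w : W, (∀ i ∈ J, cs.length w < cs.length (w * cs.simple i)) ↔
      (∃ y : W, xJ0 = y * w ∧ cs.length xJ0 = cs.length y + cs.length w) := by
  intro w
  change w ∈ minCosetReps cs J ↔ WeakLE cs w xJ0
  subst hfact
  refine ⟨fun hw ↦ ?_, fun hw ↦ hw.mem_minCosetReps hxJ0⟩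
  have le_longest : WeakLE cs (w * wJ0) (xJ0 * wJ0) := weakLE_of_forall_length_le hw0 _
  exact le_longest.of_mul_right (length_mul_of_mem_minCosetReps hw hwJ0)
    (length_mul_of_mem_minCosetReps hxJ0 hwJ0)
end
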